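/- arXiv:1703.04787 — 3 statements merged into one kernel-verified Lean document; each statement's English description precedes it below -/
import Mathlib

section
/- Let R be a ring and let M and N be flat right R-modules that are invariant under endomorphisms of their cotorsion envelopes. If there is a pure monomorphism from M to N and a pure monomorphism from N to M, then M ≅ N. -/
/-!
Corollary 2.8(3): Schröder–Bernstein for flat modules invariant under endomorphisms of
their cotorsion envelopes. "Right R-modules" are formalized as Lean `Module R` modules
(the theory is side-symmetric).
-/

universe u

variable (R : Type u) [Ring R]

/-- `f : A → B` is a pure monomorphism. We use the standard equational criterion
(solvability of finite linear systems descends from `B` to `A`), which for arbitrary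
(possibly noncommutative) rings is equivalent to injectivity of `f ⊗ 1_C` for all
modules `C` on the other side. -/
def IsPureMono {A B : Type u} [AddCommGroup A] [Module R A] [AddCommGroup B] [Module R B]
    (f : A →ₗ[R] B) : Prop :=
  Function.Injective f ∧
    ∀ (m n : ℕ) (r : Fin m → Fin n → R) (a : Fin m → A),
      (∃ y : Fin n → B, ∀ i, ∑ j, r i j • y j = f (a i)) →
      ∃ x : Fin n → A, ∀ i, ∑ j, r i j • x j = a i

/-- `F` is a flat `R`-module: every surjection onto `F` has pure kernel, i.e. every short
exact sequence `0 → K → L → F → 0` is pure. (For arbitrary rings this is equivalent to the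
tensor-product definition of flatness.) -/
def IsFlatModule (F : Type u) [AddCommGroup F] [Module R F] : Prop :=
  ∀ (L : Type u) [AddCommGroup L] [Module R L] (p : L →ₗ[R] F),
    Function.Surjective p → IsPureMono R (LinearMap.ker p).subtype

/-- `M` is cotorsion, i.e. `Ext¹_R(F, M) = 0` for every flat `R`-module `F`: equivalently,
every monomorphism out of `M` with flat cokernel splits. -/
def IsCotorsionModule (M : Type u) [AddCommGroup M] [Module R M] : Prop :=
  ∀ (L : Type u) [AddCommGroup L] [Module R L] (v : M →ₗ[R] L),
    Function.Injective v → IsFlatModule R (L ⧸ LinearMap.range v) →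
    ∃ p : L →ₗ[R] M, p ∘ₗ v = LinearMap.id

/-- `u : M → C` is a cotorsion envelope of `M`: `u` is an injective homomorphism into a
cotorsion module `C`, every homomorphism from `M` to a cotorsion module factors through
`u`, and every endomorphism `h` of `C` with `h ∘ u = u` is an automorphism. -/
def IsCotorsionEnvelope (M C : Type u) [AddCommGroup M] [Module R M]
    [AddCommGroup C] [Module R C] (u : M →ₗ[R] C) : Prop :=
  Function.Injective u ∧ IsCotorsionModule R C ∧
    (∀ (Q : Type u) [AddCommGroup Q] [Module R Q], IsCotorsionModule R Q →
      ∀ f : M →ₗ[R] Q, ∃ g : C →ₗ[R] Q, g ∘ₗ u = f) ∧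
    (∀ h : C →ₗ[R] C, h ∘ₗ u = u → Function.Bijective h)

/-- `M` is invariant under endomorphisms of its cotorsion envelope: for a cotorsion
envelope `u : M → C` and every endomorphism `φ` of `C`, there is an endomorphism `f` of
`M` with `u ∘ f = φ ∘ u`. -/
def IsCotorsionEndoInvariant (M : Type u) [AddCommGroup M] [Module R M] : Prop :=
  ∃ (C : Type u) (_ : AddCommGroup C) (_ : Module R C) (u : M →ₗ[R] C),
    IsCotorsionEnvelope R M C u ∧
    ∀ φ : C →ₗ[R] C, ∃ f : M →ₗ[R] M, u ∘ₗ f = φ ∘ₗ u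

/-!
A module that is invariant under endomorphisms of its cotorsion envelope is injective with respect
to the monomorphisms with flat cokernel whose codomain it generates, and it is this weak form of
quasi-injectivity that drives Bumby's proof of the Schröder–Bernstein property. Splitting the
composites of the two pure monomorphisms gives `M ≅ N × X` and maps `s : N × X → N`,
`t : N → N × X` with `t ∘ s = id`, and the point is to absorb `X` into `N`. The smallest submodule
`C` of `N` with `s (C × X) ≤ C` satisfies `C × X ≅ C` and is pure in `N`. In place of an envelope of
`C` one takes a minimal flat extension `E` generated by `N`: such extensions are closed under
filtered colimits and `N` is weakly terminal among them, so a cardinality argument on transfinite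
chains yields a weakly terminal one all of whose endomorphisms are bijective. Minimality transports
`C × X ≅ C` to `E × X ≅ E`, and `E` is a direct summand of `N`, whence `N × X ≅ N`.
-/

universe v w

section WeaklyTerminal

open CategoryTheory Limits

variable {C : Type w} [Category.{v} C] [HasFilteredColimitsOfSize.{u, u} C]

lemma hasIterationOfShape_of_hasFilteredColimits (J : Type u) [LinearOrder J] [Nonempty J] :
    HasIterationOfShape J C where
  hasColimitsOfShape_of_isSuccLimit j hj :=
    haveI : Nonempty (Set.Iio j) := (Set.Iio_nonempty.2 hj.not_isMin).to_subtype
    HasFilteredColimitsOfSize.HasColimitsOfShape _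
  hasColimitsOfShape := HasFilteredColimitsOfSize.HasColimitsOfShape J

lemma exists_chain_forall_exists_lt_eq {W : MorphismProperty C}
    (hW : ∀ A, ∃ (B : C) (f : A ⟶ B), W f) (A₀ : C) (X : Type u) :
    ∃ (J : Type u) (_ : LinearOrder J) (_ : SuccOrder J) (_ : NoMaxOrder J) (_ : Nonempty J)
      (G : J ⥤ C), (∀ j, W (G.map (homOfLE (Order.le_succ j)))) ∧
        ∀ p : J → X, ∃ i j, i < j ∧ p i = p j := by
  let c : Cardinal.{u} := Order.succ (Cardinal.mk X ⊔ Cardinal.aleph0)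
  have hc : Cardinal.mk X ⊔ Cardinal.aleph0 < c := Order.lt_succ _
  let J := c.ord.ToType
  have hJ : Cardinal.mk J = c := Cardinal.mk_ord_toType c
  have : NoMaxOrder J := Cardinal.noMaxOrder (le_sup_right.trans hc.le)
  have : Nonempty J := Cardinal.mk_ne_zero_iff.1 (hJ ▸ (zero_le.trans_lt hc).ne')
  let : OrderBot J := WellFoundedLT.toOrderBot J
  have : HasIterationOfShape J C := hasIterationOfShape_of_hasFilteredColimits J
  choose next toNext hnext using hW
  let Φ : SmallObject.SuccStruct C := ⟨A₀, next, toNext⟩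
  have hΦ : Φ.prop ≤ W := by
    rintro _ _ _ ⟨A⟩
    exact hnext _
  refine ⟨J, inferInstance, inferInstance, inferInstance, inferInstance,
    Φ.iterationFunctor J, fun j ↦ hΦ _ (Φ.prop_iterationFunctor_map_succ j (not_isMax j)),
    fun p ↦ ?_⟩
  have hp : ¬ Function.Injective p := fun hp ↦
    ((Cardinal.mk_le_of_injective hp).trans_lt (le_sup_left.trans_lt hc)).ne hJ
  obtain ⟨i, j, hij, hne⟩ := Function.not_injective_iff.1 hp
  exact hne.lt_or_gt.elim (fun h ↦ ⟨i, j, h, hij⟩) fun h ↦ ⟨j, i, h, hij.symm⟩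

variable (F : C ⥤ Type u)

-- Otherwise a long chain under `T` identifies a new pair of elements of `F.obj T` at every step.
lemma exists_hom_forall_map_eq_imp {T : C} (hT : ∀ A : C, Nonempty (A ⟶ T)) :
    ∃ h : T ⟶ T, ∀ (A : C) (k : T ⟶ A) (x y : F.obj T),
      F.map (h ≫ k) x = F.map (h ≫ k) y → F.map h x = F.map h y := by
  by_contra! hcon
  let W : MorphismProperty (Under T) := fun A B _ ↦ ∃ x y : F.obj T,
    F.map A.hom x ≠ F.map A.hom y ∧ F.map B.hom x = F.map B.hom y
  have hW (A : Under T) : ∃ (B : Under T) (f : A ⟶ B), W f := by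
    obtain ⟨r⟩ := hT A.right
    obtain ⟨B, k, x, y, heq, hne⟩ := hcon (A.hom ≫ r)
    refine ⟨Under.mk (A.hom ≫ r ≫ k), Under.homMk (r ≫ k), x, y, fun h ↦ hne ?_, ?_⟩
    · simp only [Functor.map_comp, comp_apply, h]
    · simpa using heq
  have : HasFilteredColimitsOfSize.{u, u} (Under T) :=
    ⟨fun _ _ _ ↦ inferInstance⟩
  obtain ⟨J, _, _, _, _, G, hG, hJ⟩ :=
    exists_chain_forall_exists_lt_eq hW (Under.mk (𝟙 T)) (F.obj T × F.obj T)
  choose x y hne heq using hG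
  obtain ⟨i, j, hij, hp⟩ := hJ fun j ↦ (x j, y j)
  obtain ⟨hx, hy⟩ := Prod.mk.inj hp
  have hw := Under.w (G.map (homOfLE (Order.succ_le_of_lt hij)))
  apply hne j
  rw [← hx, ← hy, ← hw]
  simp only [Functor.map_comp, comp_apply, heq i]

lemma exists_forall_injective_map [PreservesFilteredColimitsOfSize.{u, u} F] {T : C}
    (hT : ∀ A : C, Nonempty (A ⟶ T)) :
    ∃ (E : C) (_ : T ⟶ E), ∀ (A : C) (k : E ⟶ A), Function.Injective (F.map k) := by
  obtain ⟨h, hh⟩ := exists_hom_forall_map_eq_imp F hT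
  have : HasFilteredColimitsOfSize.{0, 0} C := hasFilteredColimitsOfSize_of_univLE.{0, 0, u, u}
  have := preservesFilteredColimitsOfSize_of_univLE.{u, u, 0, 0} F
  let S : ℕ ⥤ C := Functor.ofSequence fun _ : ℕ ↦ h
  let ι (n : ℕ) : T ⟶ colimit S := colimit.ι S n
  have hι (n : ℕ) : ι n = h ≫ ι (n + 1) := by
    have := colimit.w S (homOfLE n.le_succ)
    rw [Functor.ofSequence_map_homOfLE_succ] at this
    exact this.symm
  refine ⟨colimit S, ι 0, fun A k a b hab ↦ ?_⟩
  obtain ⟨n, (x : F.obj T), (y : F.obj T), rfl, rfl⟩ :=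
    Types.FilteredColimit.jointly_surjective_of_isColimit₂
      (isColimitOfPreserves F (colimit.isColimit S)) a b
  change F.map k (F.map (ι n) x) = F.map k (F.map (ι n) y) at hab
  change F.map (ι n) x = F.map (ι n) y
  have hxy : F.map h x = F.map h y := hh A (ι (n + 1) ≫ k) x y <| by
    rw [← Category.assoc, ← hι]
    simpa only [Functor.map_comp, comp_apply] using hab
  simp only [hι n, Functor.map_comp, comp_apply, hxy]

-- Otherwise a long chain of copies of `E` acquires a new element of `F.obj E` at every step.
lemma surjective_map_of_forall_injective {E : C} (hE : ∀ A : C, Nonempty (A ⟶ E))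
    (hinj : ∀ (A : C) (k : E ⟶ A), Function.Injective (F.map k)) (g : E ⟶ E) :
    Function.Surjective (F.map g) := by
  by_contra hg
  let W : MorphismProperty C := fun _ B f ↦
    (∀ (A : C) (k : B ⟶ A), Function.Injective (F.map k)) ∧ ¬ Function.Surjective (F.map f)
  have hW (A : C) : ∃ (B : C) (f : A ⟶ B), W f := by
    obtain ⟨r⟩ := hE A
    refine ⟨E, r ≫ g, hinj, fun hs ↦ hg fun a ↦ ?_⟩
    obtain ⟨b, rfl⟩ := hs a
    exact ⟨F.map r b, by simp only [Functor.map_comp, comp_apply]⟩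
  obtain ⟨J, _, _, _, _, G, hG, hJ⟩ := exists_chain_forall_exists_lt_eq hW E (F.obj E)
  have := HasFilteredColimitsOfSize.HasColimitsOfShape (C := C) J
  obtain ⟨r⟩ := hE (colimit G)
  let ρ (j : J) : G.obj j ⟶ E := colimit.ι G j ≫ r
  have hρ {i j : J} (hij : i ≤ j) : G.map (homOfLE hij) ≫ ρ j = ρ i := by simp [ρ]
  choose e he using fun j ↦ not_forall.1 (hG j).2
  obtain ⟨i, j, hij, hp⟩ := hJ fun j ↦ F.map (ρ (Order.succ j)) (e j)
  have hle := Order.succ_le_of_lt hij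
  refine he j ⟨F.map (G.map (homOfLE hle)) (e i), (hG j).1 _ (ρ _) ?_⟩
  rw [← hp, ← hρ (hle.trans (Order.le_succ j)), ← homOfLE_comp hle (Order.le_succ j)]
  simp only [Functor.map_comp, comp_apply]

theorem exists_forall_bijective_map [PreservesFilteredColimitsOfSize.{u, u} F] {T : C}
    (hT : ∀ A : C, Nonempty (A ⟶ T)) :
    ∃ (E : C) (_ : T ⟶ E), ∀ g : E ⟶ E, Function.Bijective (F.map g) := by
  obtain ⟨E, ι, hE⟩ := exists_forall_injective_map F hT
  exact ⟨E, ι, fun g ↦ ⟨hE E g,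
    surjective_map_of_forall_injective F (fun A ↦ (hT A).map (· ≫ ι)) hE g⟩⟩

end WeaklyTerminal

section Flat

variable {R}
variable {A B F L M N P Q : Type u} [AddCommGroup A] [Module R A] [AddCommGroup B] [Module R B]
  [AddCommGroup F] [Module R F] [AddCommGroup L] [Module R L] [AddCommGroup M] [Module R M]
  [AddCommGroup N] [Module R N] [AddCommGroup P] [Module R P] [AddCommGroup Q] [Module R Q]

lemma IsPureMono.comp {g : N →ₗ[R] P} {f : M →ₗ[R] N} (hg : IsPureMono R g)
    (hf : IsPureMono R f) : IsPureMono R (g ∘ₗ f) :=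
  ⟨hg.1.comp hf.1, fun m n r a h ↦ hf.2 m n r a (hg.2 m n r _ h)⟩

-- Pull `p` back along `φ`, so that flatness of `F` applies to a surjection onto `F`.
lemma IsFlatModule.exists_lift (hF : IsFlatModule R F) {p : L →ₗ[R] B}
    (hp : Function.Surjective p) (φ : F →ₗ[R] B) {m n : ℕ} {r : Fin m → Fin n → R}
    {x : Fin n → F} (hx : ∀ i, ∑ j, r i j • x j = 0) :
    ∃ y : Fin n → L, (∀ j, p (y j) = φ (x j)) ∧ ∀ i, ∑ j, r i j • y j = 0 := by
  let pullback := LinearMap.eqLocus (p ∘ₗ LinearMap.fst R L F) (φ ∘ₗ LinearMap.snd R L F)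
  let q : pullback →ₗ[R] F := LinearMap.snd R L F ∘ₗ pullback.subtype
  have hq : Function.Surjective q := fun b ↦
    let ⟨l, hl⟩ := hp (φ b)
    ⟨⟨(l, b), hl⟩, rfl⟩
  choose z hz using fun j ↦ hq (x j)
  have hker (i : Fin m) : ∑ j, r i j • z j ∈ LinearMap.ker q := by
    simp only [LinearMap.mem_ker, map_sum, map_smul, hz, hx]
  obtain ⟨w, hw⟩ := (hF pullback q hq).2 m n r (fun i ↦ ⟨_, hker i⟩) ⟨z, fun i ↦ rfl⟩
  let c (j : Fin n) : pullback := z j - w j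
  have hqc (j : Fin n) : q (c j) = x j := by rw [map_sub, hz, (w j).2, sub_zero]
  have hc (i : Fin m) : ∑ j, r i j • c j = 0 := by
    simpa [c, smul_sub, sub_eq_zero] using (congrArg Subtype.val (hw i)).symm
  refine ⟨fun j ↦ (c j).1.1, fun j ↦ hqc j ▸ (c j).2, fun i ↦ ?_⟩
  simpa using congrArg (LinearMap.fst R L F ∘ₗ pullback.subtype) (hc i)

lemma isFlatModule_of_forall_relation
    (h : ∀ (m n : ℕ) (r : Fin m → Fin n → R) (x : Fin n → B), (∀ i, ∑ j, r i j • x j = 0) →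
      ∃ (F : Type u) (_ : AddCommGroup F) (_ : Module R F) (φ : F →ₗ[R] B) (y : Fin n → F),
        IsFlatModule R F ∧ (∀ j, φ (y j) = x j) ∧ ∀ i, ∑ j, r i j • y j = 0) :
    IsFlatModule R B := by
  intro L _ _ p hp
  refine ⟨Subtype.val_injective, ?_⟩
  rintro m n r a ⟨y, hy⟩
  have hpy (i : Fin m) : ∑ j, r i j • p (y j) = 0 := by
    simpa using congrArg p (hy i)
  obtain ⟨F, _, _, φ, x, hF, hφ, hx⟩ := h m n r (p ∘ y) hpy
  obtain ⟨z, hz, hrel⟩ := hF.exists_lift hp φ hx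
  refine ⟨fun j ↦ ⟨y j - z j, by simp [hz, hφ]⟩, fun i ↦ Subtype.ext ?_⟩
  simpa [smul_sub, hrel] using hy i

lemma IsFlatModule.of_linearEquiv (hF : IsFlatModule R F) (e : F ≃ₗ[R] B) : IsFlatModule R B :=
  isFlatModule_of_forall_relation fun _ _ _ x hx ↦
    ⟨F, _, _, e.toLinearMap, fun j ↦ e.symm (x j), hF, fun j ↦ e.apply_symm_apply _, fun i ↦ by
      simpa using congrArg e.symm (hx i)⟩

lemma IsPureMono.isFlatModule_quotient_range {f : M →ₗ[R] N} (hf : IsPureMono R f)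
    (hN : IsFlatModule R N) : IsFlatModule R (N ⧸ LinearMap.range f) := by
  refine isFlatModule_of_forall_relation fun m n r x hx ↦ ?_
  choose y hy using fun j ↦ (LinearMap.range f).mkQ_surjective (x j)
  have hmem (i : Fin m) : ∑ j, r i j • y j ∈ LinearMap.range f := by
    rw [← Submodule.Quotient.mk_eq_zero, ← Submodule.mkQ_apply]
    simpa [hy] using hx i
  choose a ha using hmem
  obtain ⟨b, hb⟩ := hf.2 m n r a ⟨y, fun i ↦ (ha i).symm⟩
  refine ⟨N, _, _, (LinearMap.range f).mkQ, fun j ↦ y j - f (b j), hN, fun j ↦ ?_, fun i ↦ ?_⟩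
  · rw [map_sub, hy, sub_eq_self]
    simp
  · simp [smul_sub, ← ha, ← hb]

lemma exists_pushout_injective {i : A →ₗ[R] B} (hi : Function.Injective i) (φ : A →ₗ[R] Q) :
    ∃ (X : Type u) (_ : AddCommGroup X) (_ : Module R X) (v : Q →ₗ[R] X) (w : B →ₗ[R] X),
      Function.Injective v ∧ w ∘ₗ i = v ∘ₗ φ ∧
        Nonempty ((B ⧸ LinearMap.range i) ≃ₗ[R] X ⧸ LinearMap.range v) := by
  let S : Submodule R (Q × B) := LinearMap.range (φ.prod (-i))
  let v : Q →ₗ[R] (Q × B) ⧸ S := S.mkQ ∘ₗ LinearMap.inl R Q B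
  let w : B →ₗ[R] (Q × B) ⧸ S := S.mkQ ∘ₗ LinearMap.inr R Q B
  have hmk (q : Q) (b : B) : S.mkQ (q, b) = v q + w b := by
    simp only [v, w, LinearMap.comp_apply, ← map_add]
    simp
  have hvw (q : Q) (b : B) : v q = w b ↔ ∃ a, φ a = q ∧ i a = b := by
    rw [← sub_eq_zero, sub_eq_add_neg, ← map_neg, ← hmk, Submodule.mkQ_apply,
      Submodule.Quotient.mk_eq_zero]
    simp [S]
  let π := (LinearMap.range v).mkQ ∘ₗ w
  have hπ : Function.Surjective π := by
    intro y
    obtain ⟨y, rfl⟩ := Submodule.mkQ_surjective _ y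
    obtain ⟨⟨q, b⟩, rfl⟩ := Submodule.mkQ_surjective _ y
    exact ⟨b, by simp [π, hmk]⟩
  have hker : LinearMap.range i = LinearMap.ker π := by
    ext b
    simp [π, hvw]
  refine ⟨_, _, _, v, w, ?_, LinearMap.ext fun a ↦ ((hvw _ _).2 ⟨a, rfl, rfl⟩).symm,
    ⟨(Submodule.quotEquivOfEq _ _ hker).trans (π.quotKerEquivOfSurjective hπ)⟩⟩
  rw [injective_iff_map_eq_zero]
  intro q hq
  obtain ⟨a, rfl, ha⟩ := (hvw q 0).1 (by rw [hq, map_zero])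
  rw [(injective_iff_map_eq_zero i).1 hi a ha, map_zero]

lemma IsCotorsionModule.exists_extension (hQ : IsCotorsionModule R Q) {i : A →ₗ[R] B}
    (hi : Function.Injective i) (hflat : IsFlatModule R (B ⧸ LinearMap.range i))
    (φ : A →ₗ[R] Q) : ∃ ψ : B →ₗ[R] Q, ψ ∘ₗ i = φ := by
  obtain ⟨X, _, _, v, w, hv, hwv, ⟨e⟩⟩ := exists_pushout_injective hi φ
  obtain ⟨p, hp⟩ := hQ X v hv (hflat.of_linearEquiv e)
  exact ⟨p ∘ₗ w, by rw [LinearMap.comp_assoc, hwv, ← LinearMap.comp_assoc, hp,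
    LinearMap.id_comp]⟩

/-- An extension `i : P → A` with flat cokernel whose codomain is generated by `N`, i.e. is the sum
of the images of all homomorphisms from `N`. These are the extensions along which the homomorphisms
into `N` will be extended. -/
structure IsFlatExtension (N : Type u) [AddCommGroup N] [Module R N] (i : P →ₗ[R] A) :
    Prop where
  injective : Function.Injective i
  flat : IsFlatModule R (A ⧸ LinearMap.range i)
  generated : ⨆ τ : N →ₗ[R] A, LinearMap.range τ = ⊤

variable (R) in
/-- The weak form of quasi-injectivity used in place of invariance under endomorphisms of a
cotorsion envelope: homomorphisms into `N` extend along the flat extensions generated by `N`. -/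
def IsFlatQuasiInjective (N : Type u) [AddCommGroup N] [Module R N] : Prop :=
  ∀ (P A : Type u) [AddCommGroup P] [Module R P] [AddCommGroup A] [Module R A] (i : P →ₗ[R] A),
    IsFlatExtension N i → ∀ φ : P →ₗ[R] N, ∃ ψ : A →ₗ[R] N, ψ ∘ₗ i = φ

lemma IsCotorsionEndoInvariant.isFlatQuasiInjective (hN : IsCotorsionEndoInvariant R N) :
    IsFlatQuasiInjective R N := by
  intro P A _ _ _ _ i hi φ
  obtain ⟨D, _, _, v, ⟨hv, hD, hext, -⟩, hinv⟩ := hN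
  obtain ⟨ψ, hψ⟩ := hD.exists_extension hi.injective hi.flat (v ∘ₗ φ)
  have hle (τ : N →ₗ[R] A) : LinearMap.range τ ≤ (LinearMap.range v).comap ψ := by
    rintro _ ⟨y, rfl⟩
    obtain ⟨g, hg⟩ := hext D hD (ψ ∘ₗ τ)
    obtain ⟨f, hf⟩ := hinv g
    exact ⟨f y, LinearMap.congr_fun (hf.trans hg) y⟩
  have hmem (a : A) : ψ a ∈ LinearMap.range v :=
    iSup_le hle (hi.generated ▸ Submodule.mem_top)
  let e := LinearEquiv.ofInjective v hv
  refine ⟨e.symm ∘ₗ ψ.codRestrict _ hmem, LinearMap.ext fun p ↦ e.symm_apply_eq.2 ?_⟩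
  exact Subtype.ext (LinearMap.congr_fun hψ p)

lemma IsPureMono.isFlatExtension {f : P →ₗ[R] N} (hf : IsPureMono R f) (hN : IsFlatModule R N) :
    IsFlatExtension N f where
  injective := hf.1
  flat := hf.isFlatModule_quotient_range hN
  generated := top_unique <| le_iSup_of_le LinearMap.id LinearMap.range_id.ge

lemma IsPureMono.exists_retraction (hM : IsFlatModule R M) (hM' : IsFlatQuasiInjective R M)
    {f : M →ₗ[R] M} (hf : IsPureMono R f) : ∃ r : M →ₗ[R] M, r ∘ₗ f = LinearMap.id :=
  hM' M M f (hf.isFlatExtension hM) LinearMap.id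

end Flat

section FilteredColimit

open CategoryTheory Limits

variable {R}
variable {N P : Type u} [AddCommGroup N] [Module R N] [AddCommGroup P] [Module R P]

section IsColimit

variable {J : Type u} [SmallCategory J] [IsFiltered J] {D : J ⥤ ModuleCat.{u} R} {c : Cocone D}

lemma exists_rep_of_isColimit (hc : IsColimit c) {n : ℕ} (y : Fin n → c.pt) :
    ∃ (j : J) (x : Fin n → D.obj j), ∀ l, c.ι.app j (x l) = y l := by
  classical
  choose j x hx using fun l ↦ Concrete.isColimit_exists_rep D hc (y l)
  obtain ⟨k, hk⟩ := IsFiltered.sup_objs_exists (Finset.univ.image j)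
  let f (l : Fin n) : j l ⟶ k := (hk (Finset.mem_image_of_mem j (Finset.mem_univ l))).some
  refine ⟨k, fun l ↦ D.map (f l) (x l), fun l ↦ ?_⟩
  rw [← hx l, ← c.w (f l)]
  rfl

lemma exists_map_eq_zero_of_isColimit (hc : IsColimit c) {j : J} {n : ℕ} {x : Fin n → D.obj j}
    (hx : ∀ l, c.ι.app j (x l) = 0) : ∃ (k : J) (f : j ⟶ k), ∀ l, D.map f (x l) = 0 := by
  classical
  have hex (l : Fin n) : ∃ g : Under j, D.map g.hom (x l) = 0 := by
    obtain ⟨k, f, hf⟩ := (hc.eq_iff' (x l) 0).1 (by rw [hx, map_zero])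
    exact ⟨Under.mk f, by simpa using hf⟩
  choose g hg using hex
  obtain ⟨k, hk⟩ := IsFiltered.sup_objs_exists (Finset.univ.image g)
  let f (l : Fin n) : g l ⟶ k := (hk (Finset.mem_image_of_mem g (Finset.mem_univ l))).some
  refine ⟨k.right, k.hom, fun l ↦ ?_⟩
  rw [← Under.w (f l), Functor.map_comp, ModuleCat.comp_apply, hg, map_zero]

lemma isFlatModule_quotient_range_of_isColimit (hc : IsColimit c) {i : ∀ j, P →ₗ[R] D.obj j}
    (hi : ∀ j, IsFlatModule R (D.obj j ⧸ LinearMap.range (i j)))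
    (hD : ∀ {j k : J} (f : j ⟶ k), (D.map f).hom ∘ₗ i j = i k) {i' : P →ₗ[R] c.pt}
    (hι : ∀ j, (c.ι.app j).hom ∘ₗ i j = i') : IsFlatModule R (c.pt ⧸ LinearMap.range i') := by
  refine isFlatModule_of_forall_relation fun m n r x hx ↦ ?_
  choose y hy using fun t ↦ (LinearMap.range i').mkQ_surjective (x t)
  have hmem (l : Fin m) : ∑ t, r l t • y t ∈ LinearMap.range i' := by
    rw [← Submodule.Quotient.mk_eq_zero, ← Submodule.mkQ_apply]
    simpa [hy] using hx l
  choose p hp using hmem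
  obtain ⟨j, z, hz⟩ := exists_rep_of_isColimit hc y
  have hzp (l : Fin m) : c.ι.app j (∑ t, r l t • z t - i j (p l)) = 0 := by
    rw [map_sub, map_sum, sub_eq_zero]
    exact .trans (by simp [hz]) ((hp l).symm.trans (LinearMap.congr_fun (hι j) _).symm)
  obtain ⟨k, f, hf⟩ := exists_map_eq_zero_of_isColimit hc hzp
  refine ⟨_, _, _, (LinearMap.range (i k)).mapQ (LinearMap.range i') (c.ι.app k).hom ?_,
    fun t ↦ (LinearMap.range (i k)).mkQ (D.map f (z t)), hi k, fun t ↦ ?_, fun l ↦ ?_⟩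
  · rintro _ ⟨p, rfl⟩
    exact ⟨p, (LinearMap.congr_fun (hι k) p).symm⟩
  · rw [← hy, ← hz, ← c.w f]
    rfl
  · simp only [← map_smul, ← map_sum]
    have hfl : D.map f (∑ t, r l t • z t) = D.map f (i j (p l)) := by
      rw [← sub_eq_zero, ← map_sub, hf]
    exact (Submodule.Quotient.mk_eq_zero _).2
      ⟨p l, (LinearMap.congr_fun (hD f) (p l)).symm.trans hfl.symm⟩

lemma iSup_range_eq_top_of_isColimit (hc : IsColimit c)
    (h : ∀ j, ⨆ τ : N →ₗ[R] D.obj j, LinearMap.range τ = ⊤) :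
    ⨆ τ : N →ₗ[R] c.pt, LinearMap.range τ = ⊤ := by
  refine eq_top_iff.2 fun a _ ↦ ?_
  obtain ⟨j, b, rfl⟩ := Concrete.isColimit_exists_rep D hc a
  have hle : ⨆ τ : N →ₗ[R] D.obj j, LinearMap.range τ ≤
      (⨆ τ : N →ₗ[R] c.pt, LinearMap.range τ).comap (c.ι.app j).hom := by
    refine iSup_le fun τ ↦ ?_
    rintro _ ⟨y, rfl⟩
    exact Submodule.mem_iSup_of_mem ((c.ι.app j).hom ∘ₗ τ) ⟨y, rfl⟩
  exact hle (h j ▸ Submodule.mem_top)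

lemma IsFlatExtension.of_isColimit (hc : IsColimit c) {i : ∀ j, P →ₗ[R] D.obj j}
    (hi : ∀ j, IsFlatExtension N (i j))
    (hD : ∀ {j k : J} (f : j ⟶ k), (D.map f).hom ∘ₗ i j = i k) {i' : P →ₗ[R] c.pt}
    (hι : ∀ j, (c.ι.app j).hom ∘ₗ i j = i') : IsFlatExtension N i' where
  injective := by
    rw [injective_iff_map_eq_zero]
    intro p hp
    obtain ⟨j⟩ := IsFiltered.nonempty (C := J)
    have hjp : c.ι.app j (i j p) = c.ι.app j 0 := by
      rw [map_zero]
      exact (LinearMap.congr_fun (hι j) p).trans hp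
    obtain ⟨k, f, hf⟩ := (hc.eq_iff' (i j p) 0).1 hjp
    refine (injective_iff_map_eq_zero (i k)).1 (hi k).injective p ?_
    exact (LinearMap.congr_fun (hD f) p).symm.trans (hf.trans (map_zero _))
  flat := isFlatModule_quotient_range_of_isColimit hc (fun j ↦ (hi j).flat) hD hι
  generated := iSup_range_eq_top_of_isColimit hc fun j ↦ (hi j).generated

end IsColimit

variable (N P) in
/-- The flat extensions of `P` generated by `N`, as a class of objects of the category of modules
under `P`, to which the results on weakly terminal objects are applied. -/
def flatExtensions : ObjectProperty (Under (ModuleCat.of R P)) :=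
  fun A ↦ IsFlatExtension N A.hom.hom

instance (J : Type u) [SmallCategory J] [IsFiltered J] :
    (flatExtensions (R := R) N P).IsClosedUnderColimitsOfShape J where
  colimitsOfShape_le := by
    rintro A ⟨h⟩
    exact IsFlatExtension.of_isColimit (isColimitOfPreserves (Under.forget _) h.isColimit)
      (i := fun j ↦ (h.diag.obj j).hom.hom) h.prop_diag_obj
      (fun f ↦ congrArg ModuleCat.Hom.hom (Under.w (h.diag.map f)))
      fun j ↦ congrArg ModuleCat.Hom.hom (Under.w (h.ι.app j))

instance : HasFilteredColimitsOfSize.{u, u} (flatExtensions (R := R) N P).FullSubcategory where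
  HasColimitsOfShape _ _ _ := inferInstance

instance : PreservesFilteredColimitsOfSize.{u, u} (flatExtensions (R := R) N P).ι where
  preserves_filtered_colimits _ _ _ := inferInstance

lemma IsFlatQuasiInjective.exists_minimal_extension (hN : IsFlatQuasiInjective R N) {i : P →ₗ[R] N}
    (hi : IsFlatExtension N i) :
    ∃ (E : Type u) (_ : AddCommGroup E) (_ : Module R E) (κ : N →ₗ[R] E) (β : E →ₗ[R] N),
      β ∘ₗ κ ∘ₗ i = i ∧
        ∀ k : E →ₗ[R] E, k ∘ₗ κ ∘ₗ i = κ ∘ₗ i → Function.Bijective k := by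
  let T : (flatExtensions N P).FullSubcategory := ⟨Under.mk (ModuleCat.ofHom i), hi⟩
  have hT (A : (flatExtensions N P).FullSubcategory) : Nonempty (A ⟶ T) := by
    obtain ⟨ψ, hψ⟩ := hN P A.obj.right A.obj.hom.hom A.property i
    exact ⟨ObjectProperty.homMk (Under.homMk (ModuleCat.ofHom ψ) (ModuleCat.hom_ext hψ))⟩
  obtain ⟨E, κ, hE⟩ := exists_forall_bijective_map
    ((flatExtensions N P).ι ⋙ Under.forget _ ⋙ forget (ModuleCat R)) hT
  have hκ : κ.hom.right.hom ∘ₗ i = E.obj.hom.hom :=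
    congrArg ModuleCat.Hom.hom (Under.w κ.hom)
  obtain ⟨β⟩ := hT E
  refine ⟨E.obj.right, _, _, κ.hom.right.hom, β.hom.right.hom, ?_, fun k hk ↦ ?_⟩
  · rw [hκ]
    exact congrArg ModuleCat.Hom.hom (Under.w β.hom)
  · rw [hκ] at hk
    exact hE (ObjectProperty.homMk (Under.homMk (ModuleCat.ofHom k) (ModuleCat.hom_ext hk)))

end FilteredColimit

section Bumby

variable {R}
variable {A B E N P X : Type u} [AddCommGroup A] [Module R A] [AddCommGroup B] [Module R B]
  [AddCommGroup E] [Module R E] [AddCommGroup N] [Module R N] [AddCommGroup P] [Module R P]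
  [AddCommGroup X] [Module R X]

lemma bijective_of_forall_bijective {i : P →ₗ[R] E}
    (hi : ∀ k : E →ₗ[R] E, k ∘ₗ i = i → Function.Bijective k) {σ : P × X →ₗ[R] P}
    (hσ : Function.Surjective σ) {a : E × X →ₗ[R] E} {b : E →ₗ[R] E × X}
    (ha : a ∘ₗ i.prodMap LinearMap.id = i ∘ₗ σ)
    (hb : b ∘ₗ i ∘ₗ σ = i.prodMap LinearMap.id) : Function.Bijective a := by
  have ha' (p : P) (x : X) : a (i p, x) = i (σ (p, x)) := LinearMap.congr_fun ha (p, x)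
  have hb' (p : P) (x : X) : b (i (σ (p, x))) = (i p, x) := LinearMap.congr_fun hb (p, x)
  have hab : Function.Bijective (a ∘ₗ b) := hi _ <| LinearMap.ext fun p ↦ by
    obtain ⟨⟨p, x⟩, rfl⟩ := hσ p
    simp only [LinearMap.comp_apply, hb', ha']
  let d : E →ₗ[R] E := LinearMap.fst R E X ∘ₗ b ∘ₗ a ∘ₗ LinearMap.inl R E X
  have hd : Function.Bijective d := hi _ <| LinearMap.ext fun p ↦ by
    simp only [d, LinearMap.comp_apply, LinearMap.inl_apply, ha', hb', LinearMap.fst_apply]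
  have hX (x : X) : b (a (0, x)) = (0, x) := by
    simpa only [map_zero, hb'] using congrArg b (ha' 0 x)
  refine ⟨(injective_iff_map_eq_zero a).2 ?_, .of_comp (g := b) hab.2⟩
  rintro ⟨e, x⟩ h
  have hsum : b (a (e, 0)) + (0, x) = 0 := by
    rw [← hX, ← map_add, ← map_add, Prod.mk_add_mk, add_zero, zero_add, h, map_zero]
  obtain rfl : e = 0 := (injective_iff_map_eq_zero d).1 hd.1 e <| by
    simpa [d] using congrArg Prod.fst hsum
  simpa [← Prod.zero_eq_mk] using congrArg Prod.snd hsum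

/-- The least submodule `C` of `N` with `s (C × X) ≤ C`. When `s` is injective this is the
internal direct sum of the submodules `θⁿ (s (0 × X))` for `θ = s (·, 0)`. -/
def stableCore (s : N × X →ₗ[R] N) : Submodule R N :=
  OrderHom.lfp
    ⟨fun C ↦ (C.prod ⊤).map s, fun _ _ h ↦ Submodule.map_mono (Submodule.prod_mono h le_rfl)⟩

lemma map_stableCore (s : N × X →ₗ[R] N) : ((stableCore s).prod ⊤).map s = stableCore s :=
  OrderHom.map_lfp ⟨fun C : Submodule R N ↦ (C.prod ⊤).map s, _⟩

lemma stableCore_le {s : N × X →ₗ[R] N} {C : Submodule R N} (hC : (C.prod ⊤).map s ≤ C) :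
    stableCore s ≤ C :=
  OrderHom.lfp_le _ hC

lemma apply_mem_stableCore {s : N × X →ₗ[R] N} {y : N} (hy : y ∈ stableCore s) (x : X) :
    s (y, x) ∈ stableCore s :=
  map_stableCore s ▸ Submodule.mem_map_of_mem ⟨hy, Submodule.mem_top⟩

/-- When `t ∘ s = id`, the projection of `N` onto the first `n` summands of `stableCore s`. -/
def truncation (s : N × X →ₗ[R] N) (t : N →ₗ[R] N × X) : ℕ → N →ₗ[R] N
  | 0 => 0
  | n + 1 => s ∘ₗ (truncation s t n).prodMap LinearMap.id ∘ₗ t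

lemma truncation_mem_stableCore (s : N × X →ₗ[R] N) (t : N →ₗ[R] N × X) (n : ℕ) (y : N) :
    truncation s t n y ∈ stableCore s := by
  induction n generalizing y with
  | zero => exact zero_mem _
  | succ n ih => exact apply_mem_stableCore (ih _) _

variable {s : N × X →ₗ[R] N} {t : N →ₗ[R] N × X}

lemma eventually_truncation_eq (hts : t ∘ₗ s = LinearMap.id) {y : N} (hy : y ∈ stableCore s) :
    ∀ᶠ n in Filter.atTop, truncation s t n y = y := by
  let C : Submodule R N :=
    { carrier := {y | ∀ᶠ n in Filter.atTop, truncation s t n y = y}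
      zero_mem' := .of_forall fun n ↦ map_zero _
      add_mem' := fun hx hy ↦ (hx.and hy).mono fun n h ↦ by rw [map_add, h.1, h.2]
      smul_mem' := fun c y hy ↦ hy.mono fun n h ↦ by rw [map_smul, h] }
  refine stableCore_le (C := C) ?_ hy
  rintro _ ⟨⟨z, x⟩, ⟨hz, -⟩, rfl⟩
  change ∀ᶠ n in Filter.atTop, truncation s t n (s (z, x)) = s (z, x)
  rw [← Filter.map_add_atTop_eq_nat 1, Filter.eventually_map]
  have hts' : t (s (z, x)) = (z, x) := LinearMap.congr_fun hts _
  exact Filter.Eventually.mono hz fun n hn ↦ by simp [truncation, hts', hn]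

lemma isPureMono_subtype_stableCore (hts : t ∘ₗ s = LinearMap.id) :
    IsPureMono R (stableCore s).subtype := by
  refine ⟨Subtype.val_injective, ?_⟩
  rintro m n r a ⟨y, hy⟩
  obtain ⟨k, hk⟩ := (Filter.eventually_all.2 fun i ↦ eventually_truncation_eq hts (a i).2).exists
  refine ⟨fun j ↦ ⟨_, truncation_mem_stableCore s t k (y j)⟩, fun i ↦ Subtype.ext ?_⟩
  calc
    _ = truncation s t k (∑ j, r i j • y j) := by simp
    _ = a i := by rw [hy, Submodule.subtype_apply, hk]

lemma IsFlatQuasiInjective.exists_absorbing_summand (hN : IsFlatQuasiInjective R N)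
    (hflat : IsFlatModule R N) (hts : t ∘ₗ s = LinearMap.id) :
    ∃ (E : Type u) (_ : AddCommGroup E) (_ : Module R E) (β : E →ₗ[R] N) (ρ : N →ₗ[R] E),
      ρ ∘ₗ β = LinearMap.id ∧ Nonempty ((E × X) ≃ₗ[R] E) := by
  let i := (stableCore s).subtype
  obtain ⟨E, _, _, κ, β, hβ, hE⟩ :=
    hN.exists_minimal_extension ((isPureMono_subtype_stableCore hts).isFlatExtension hflat)
  have hβ' (y : stableCore s) : β (κ y) = y := LinearMap.congr_fun hβ y
  let σ : stableCore s × X →ₗ[R] stableCore s :=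
    (s ∘ₗ i.prodMap LinearMap.id).codRestrict _ fun p ↦ apply_mem_stableCore p.1.2 p.2
  have hσ : Function.Surjective σ := by
    rintro ⟨y, hy⟩
    rw [← map_stableCore] at hy
    obtain ⟨⟨z, x⟩, ⟨hz, -⟩, rfl⟩ := hy
    exact ⟨(⟨z, hz⟩, x), rfl⟩
  have hsσ (p : stableCore s × X) : s (i p.1, p.2) = σ p := rfl
  have htσ (p : stableCore s × X) : t (σ p) = (i p.1, p.2) := LinearMap.congr_fun hts _
  let a : E × X →ₗ[R] E := κ ∘ₗ s ∘ₗ β.prodMap LinearMap.id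
  let b : E →ₗ[R] E × X := κ.prodMap LinearMap.id ∘ₗ t ∘ₗ β
  have ha : a ∘ₗ (κ ∘ₗ i).prodMap LinearMap.id = (κ ∘ₗ i) ∘ₗ σ :=
    LinearMap.ext fun p ↦ by simp [a, i, hβ', ← hsσ]
  have hb : b ∘ₗ (κ ∘ₗ i) ∘ₗ σ = (κ ∘ₗ i).prodMap LinearMap.id :=
    LinearMap.ext fun p ↦ by simp [b, i, hβ', htσ]
  let ε := LinearEquiv.ofBijective (κ ∘ₗ β) (hE _ (congrArg (κ ∘ₗ ·) hβ))
  exact ⟨E, _, _, β, ε.symm.toLinearMap ∘ₗ κ, LinearMap.ext ε.symm_apply_apply,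
    ⟨.ofBijective a (bijective_of_forall_bijective hE hσ ha hb)⟩⟩

lemma nonempty_equiv_prod_quotient_range {f : A →ₗ[R] B} {r : B →ₗ[R] A}
    (hr : r ∘ₗ f = LinearMap.id) : Nonempty (B ≃ₗ[R] A × (B ⧸ LinearMap.range f)) :=
  ⟨((LinearMap.exact_map_mkQ_range f).splitInjectiveEquiv
    (Submodule.mkQ_surjective _) ⟨r, hr⟩).1⟩

theorem IsFlatQuasiInjective.nonempty_prod_equiv (hN : IsFlatQuasiInjective R N)
    (hflat : IsFlatModule R N) (hts : t ∘ₗ s = LinearMap.id) :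
    Nonempty ((N × X) ≃ₗ[R] N) := by
  obtain ⟨E, _, _, β, ρ, hρ, ⟨absorb⟩⟩ := hN.exists_absorbing_summand hflat hts
  obtain ⟨δ⟩ := nonempty_equiv_prod_quotient_range hρ
  let K := N ⧸ LinearMap.range β
  let δ' : N ≃ₗ[R] K × E := δ ≪≫ₗ .prodComm R E K
  exact ⟨δ'.prodCongr (.refl R X) ≪≫ₗ .prodAssoc R K E X ≪≫ₗ
    (LinearEquiv.refl R K).prodCongr absorb ≪≫ₗ δ'.symm⟩

end Bumby

theorem stmt12_general (M N : Type u) [AddCommGroup M] [Module R M] [AddCommGroup N] [Module R N]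
    (hMflat : IsFlatModule R M) (hNflat : IsFlatModule R N)
    (hM : IsFlatQuasiInjective R M) (hN : IsFlatQuasiInjective R N)
    (f : M →ₗ[R] N) (hf : IsPureMono R f) (g : N →ₗ[R] M) (hg : IsPureMono R g) :
    Nonempty (M ≃ₗ[R] N) := by
  obtain ⟨r, hr⟩ := (hg.comp hf).exists_retraction hMflat hM
  obtain ⟨q, hq⟩ := (hf.comp hg).exists_retraction hNflat hN
  obtain ⟨e⟩ := nonempty_equiv_prod_quotient_range (f := g) (r := q ∘ₗ f) hq
  have hsplit : (e.toLinearMap ∘ₗ r ∘ₗ g) ∘ₗ f ∘ₗ e.symm.toLinearMap = LinearMap.id :=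
    LinearMap.ext fun p ↦ by simpa using congrArg e (LinearMap.congr_fun hr (e.symm p))
  exact (hN.nonempty_prod_equiv hNflat hsplit).map e.trans

/-- If `M` and `N` are flat modules invariant under endomorphisms of their cotorsion
envelopes and there are pure monomorphisms `M → N` and `N → M`, then `M ≅ N`. -/
theorem stmt12 (M N : Type u) [AddCommGroup M] [Module R M] [AddCommGroup N] [Module R N]
    (hMflat : IsFlatModule R M) (hNflat : IsFlatModule R N)
    (hM : IsCotorsionEndoInvariant R M) (hN : IsCotorsionEndoInvariant R N)
    (f : M →ₗ[R] N) (hf : IsPureMono R f)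
    (g : N →ₗ[R] M) (hg : IsPureMono R g) :
    Nonempty (M ≃ₗ[R] N) :=
  stmt12_general R M N hMflat hNflat hM.isFlatQuasiInjective hN.isFlatQuasiInjective f hf g hg
end

section
/- Let R be a ring, let M and N be automorphism-invariant right R-modules, and let f : M → N and g : N → M be injective R-linear maps. Then M ≅ N. -/
/-!
Theorem 3.1: Schröder–Bernstein for automorphism-invariant modules.
"Right R-modules" are formalized as Lean `Module R` modules (the theory is
side-symmetric).
-/

universe u

variable (R : Type u) [Ring R]

/-- `E` is an injective `R`-module: for every injective `R`-linear map `i : A → B`, every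
`R`-linear map `A → E` extends to an `R`-linear map `B → E`. -/
def IsInjectiveModule (E : Type u) [AddCommGroup E] [Module R E] : Prop :=
  ∀ (A B : Type u) [AddCommGroup A] [Module R A] [AddCommGroup B] [Module R B]
    (i : A →ₗ[R] B), Function.Injective i →
    ∀ f : A →ₗ[R] E, ∃ g : B →ₗ[R] E, g ∘ₗ i = f

/-- `N` is an essential submodule of `E`: every nonzero submodule of `E` meets `N`
nontrivially. -/
def IsEssentialSubmodule {E : Type u} [AddCommGroup E] [Module R E]
    (N : Submodule R E) : Prop :=
  ∀ K : Submodule R E, K ⊓ N = ⊥ → K = ⊥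

/-- `u : M → E` realizes `E` as an injective envelope of `M`: `E` is injective and `u`
embeds `M` as an essential submodule of `E`. -/
def IsInjectiveEnvelope (M E : Type u) [AddCommGroup M] [Module R M]
    [AddCommGroup E] [Module R E] (u : M →ₗ[R] E) : Prop :=
  IsInjectiveModule R E ∧ Function.Injective u ∧
    IsEssentialSubmodule R (LinearMap.range u)

/-- `M` is automorphism-invariant: `M` (viewed inside an injective envelope `E(M)`)
satisfies `φ(M) ⊆ M` for every automorphism `φ` of `E(M)`. -/
def IsAutomorphismInvariant (M : Type u) [AddCommGroup M] [Module R M] : Prop :=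
  ∃ (E : Type u) (_ : AddCommGroup E) (_ : Module R E) (u : M →ₗ[R] E),
    IsInjectiveEnvelope R M E u ∧
    ∀ φ : E ≃ₗ[R] E, ∀ x : M, φ (u x) ∈ LinearMap.range u

/-!
By Bumby's argument, `E(M)` and `E(N)` are isomorphic, and it remains to show that an
automorphism-invariant `Y ≤ E` satisfies `F x ∈ Y → x ∈ Y` for every injective `F : E → E`. Up to an
automorphism `θ` of `E`, `F` acts on an essential submodule `C^(ℕ) ⊕ T` as the shift of `C^(ℕ)`
plus the identity of `T`. The opposite shift plus the identity lies in the subring generated by the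
units of `End (C^(ℕ) ⊕ T)`, since the shifts are odd for the parity grading and hence sums of
square-zero maps. Units extend to automorphisms of `E`, so this left inverse extends to an
endomorphism `β` of `E` preserving `Y`. As `β θ F` is the identity on an essential submodule, it is
an automorphism of `E`, and `β θ F x ∈ Y` gives `x ∈ Y`.
-/

section SubringContainingUnits

variable {A : Type*} [Ring A] {S : Subring A}

lemma mem_subring_of_isNilpotent (hS : ∀ a, IsUnit a → a ∈ S) {a : A} (ha : IsNilpotent a) :
    a ∈ S := by
  simpa only [add_sub_cancel_left] using S.sub_mem (hS _ ha.isUnit_one_add) S.one_mem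

lemma mem_subring_of_idempotent_mul_add_mul_eq (hS : ∀ a, IsUnit a → a ∈ S) {p x : A}
    (hp : IsIdempotentElem p) (hx : p * x + x * p = x) : x ∈ S := by
  have hpxp : p * x * p = 0 := by
    have h : p * x + p * x * p = p * x := by
      simpa only [mul_add, ← mul_assoc, hp.eq] using congrArg (p * ·) hx
    exact left_eq_add.mp h.symm
  have hpx : IsNilpotent (p * x) :=
    ⟨2, by rw [pow_two, ← mul_assoc, hpxp, zero_mul]⟩
  have hxp : IsNilpotent (x * p) :=
    ⟨2, by rw [pow_two, mul_assoc, ← mul_assoc p, hpxp, mul_zero]⟩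
  exact hx ▸ S.add_mem (mem_subring_of_isNilpotent hS hpx) (mem_subring_of_isNilpotent hS hxp)

end SubringContainingUnits

section Shift

variable {R : Type*} [Ring R] (C : Type*) [AddCommGroup C] [Module R C]

variable (R) in
/-- The shift `(c₀, c₁, …) ↦ (0, c₀, c₁, …)` of `C^(ℕ)`. -/
noncomputable def shiftRight : Module.End R (ℕ →₀ C) :=
  Finsupp.lmapDomain C R Nat.succ

variable (R) in
/-- The shift `(c₀, c₁, …) ↦ (c₁, c₂, …)` of `C^(ℕ)`. -/
noncomputable def shiftLeft : Module.End R (ℕ →₀ C) :=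
  Finsupp.lcomapDomain Nat.succ Nat.succ_injective

variable (R) in
/-- The projection of `C^(ℕ)` onto its even coordinates, used to split the shifts into
square-zero maps. -/
noncomputable def evenPart : Module.End R (ℕ →₀ C) :=
  (Finsupp.supported C R {n | Even n}).subtype ∘ₗ Finsupp.restrictDom C R {n | Even n}

variable {C}

@[simp]
lemma shiftRight_apply_zero (c : ℕ →₀ C) : shiftRight R C c 0 = 0 :=
  Finsupp.mapDomain_of_notMem_range c 0 (by simp)

@[simp]
lemma shiftRight_apply_succ (c : ℕ →₀ C) (n : ℕ) : shiftRight R C c (n + 1) = c n :=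
  Finsupp.mapDomain_apply Nat.succ_injective c n

@[simp]
lemma shiftLeft_apply (c : ℕ →₀ C) (n : ℕ) : shiftLeft R C c n = c (n + 1) :=
  rfl

@[simp]
lemma evenPart_apply (c : ℕ →₀ C) (n : ℕ) : evenPart R C c n = if Even n then c n else 0 :=
  rfl

lemma shiftLeft_mul_shiftRight : shiftLeft R C * shiftRight R C = 1 := by
  ext1 c; ext n; simp

lemma isIdempotentElem_evenPart : IsIdempotentElem (evenPart R C) := by
  refine LinearMap.ext fun c => Finsupp.ext fun n => ?_
  by_cases hn : Even n <;> simp [hn]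

lemma evenPart_mul_shiftRight_add :
    evenPart R C * shiftRight R C + shiftRight R C * evenPart R C = shiftRight R C := by
  refine LinearMap.ext fun c => Finsupp.ext fun n => ?_
  rcases n with _ | n
  · simp
  · by_cases hn : Even n <;> simp [hn, Nat.even_add_one]

lemma evenPart_mul_shiftLeft_add :
    evenPart R C * shiftLeft R C + shiftLeft R C * evenPart R C = shiftLeft R C := by
  refine LinearMap.ext fun c => Finsupp.ext fun n => ?_
  by_cases hn : Even n <;> simp [hn, Nat.even_add_one]

variable (R C) in
/-- The isomorphism `C ⊕ C^(ℕ) ≅ C^(ℕ)` prepending a coordinate. -/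
noncomputable def consEquiv : (C × (ℕ →₀ C)) ≃ₗ[R] (ℕ →₀ C) :=
  LinearEquiv.ofLinearMap ((Finsupp.lsingle 0).coprod (shiftRight R C))
    ((Finsupp.lapply 0).prod (shiftLeft R C))
    (LinearMap.ext fun c => Finsupp.ext fun n => by rcases n with _ | n <;> simp)
    (LinearMap.ext fun x => Prod.ext (by simp) (Finsupp.ext fun n => by simp))

lemma consEquiv_zero_left (c : ℕ →₀ C) : consEquiv R C (0, c) = shiftRight R C c := by
  simp [consEquiv]

variable {T : Type*} [AddCommGroup T] [Module R T]

lemma shiftLeft_prodMap_id_mem_subring {S : Subring (Module.End R ((ℕ →₀ C) × T))}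
    (hS : ∀ a, IsUnit a → a ∈ S) : (shiftLeft R C).prodMap LinearMap.id ∈ S := by
  have mem_of_odd : ∀ x : Module.End R (ℕ →₀ C), evenPart R C * x + x * evenPart R C = x →
      x.prodMap (0 : Module.End R T) ∈ S := fun x hx => by
    have hp : IsIdempotentElem ((evenPart R C).prodMap (0 : Module.End R T)) := by
      rw [IsIdempotentElem, LinearMap.prodMap_mul, isIdempotentElem_evenPart.eq, mul_zero]
    refine mem_subring_of_idempotent_mul_add_mul_eq hS hp ?_
    rw [LinearMap.prodMap_mul, LinearMap.prodMap_mul, ← LinearMap.prodMap_add, hx, mul_zero,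
      add_zero]
  have hright := mem_of_odd _ evenPart_mul_shiftRight_add
  have hleft := mem_of_odd _ evenPart_mul_shiftLeft_add
  have hone : LinearMap.prodMap (1 : Module.End R (ℕ →₀ C)) (0 : Module.End R T) ∈ S := by
    simpa only [LinearMap.prodMap_mul, shiftLeft_mul_shiftRight, mul_zero] using
      S.mul_mem hleft hright
  have hsplit : (shiftLeft R C).prodMap LinearMap.id =
      (shiftLeft R C).prodMap (0 : Module.End R T) +
        (1 - LinearMap.prodMap (1 : Module.End R (ℕ →₀ C)) (0 : Module.End R T)) := by
    refine LinearMap.ext fun z => Prod.ext ?_ ?_ <;> simp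
  exact hsplit ▸ S.add_mem hleft (S.sub_mem S.one_mem hone)

end Shift

section Splitting

variable {R} {E E' X : Type*} [AddCommGroup E] [Module R E] [AddCommGroup E'] [Module R E']
  [AddCommGroup X] [Module R X]
  {G : E' →ₗ[R] E} {r : E →ₗ[R] E'} {j : X →ₗ[R] E'}

lemma injective_ker_coprod_comp (hr : r ∘ₗ G = LinearMap.id) (hj : Function.Injective j) :
    Function.Injective ((LinearMap.ker r).subtype.coprod (G ∘ₗ j)) := by
  refine (injective_iff_map_eq_zero _).mpr ?_
  rintro ⟨c, z⟩ h
  have hrG : ∀ y, r (G y) = y := LinearMap.congr_fun hr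
  have hcz : (c : E) + G (j z) = 0 := by simpa using h
  have hz : z = 0 := (map_eq_zero_iff j hj).mp (by simpa [hrG] using congrArg r hcz)
  simpa [hz] using hcz

lemma range_ker_coprod_comp (hr : r ∘ₗ G = LinearMap.id) :
    LinearMap.range ((LinearMap.ker r).subtype.coprod (G ∘ₗ j)) =
      (LinearMap.range j).comap r := by
  have hrG : ∀ y, r (G y) = y := LinearMap.congr_fun hr
  ext x
  constructor
  · rintro ⟨⟨c, z⟩, rfl⟩
    exact ⟨z, by simp [hrG]⟩
  · rintro ⟨z, hz⟩
    exact ⟨(⟨x - G (r x), by simp [hrG]⟩, z), by simp [hz]⟩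

end Splitting

section Essential

variable {R} {E E' : Type u} [AddCommGroup E] [Module R E] [AddCommGroup E'] [Module R E']
  {X : Type*} [AddCommGroup X] [Module R X]

lemma IsEssentialSubmodule.injective_of_comp {i : X →ₗ[R] E}
    (hi : IsEssentialSubmodule R (LinearMap.range i)) {Q : Type*} [AddCommGroup Q] [Module R Q]
    {φ : E →ₗ[R] Q} (hφi : Function.Injective (φ ∘ₗ i)) : Function.Injective φ := by
  refine LinearMap.ker_eq_bot.mp (hi _ ((Submodule.eq_bot_iff _).mpr ?_))
  rintro _ ⟨hx, x, rfl⟩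
  have hx0 : x = 0 := (map_eq_zero_iff (φ ∘ₗ i) hφi).mp hx
  rw [hx0, map_zero]

lemma IsEssentialSubmodule.comap {N : Submodule R E'} (hN : IsEssentialSubmodule R N)
    (r : E →ₗ[R] E') : IsEssentialSubmodule R (N.comap r) := by
  intro L hL
  have hmap : L.map r = ⊥ := by
    refine hN _ ((Submodule.eq_bot_iff _).mpr ?_)
    rintro _ ⟨⟨x, hxL, rfl⟩, hxN⟩
    have hx : x ∈ L ⊓ N.comap r := ⟨hxL, hxN⟩
    rw [hL, Submodule.mem_bot] at hx
    rw [hx, map_zero]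
  have hker : L ≤ N.comap r := (LinearMap.le_ker_iff_map.mpr hmap).trans r.ker_le_comap
  rwa [inf_eq_left.mpr hker] at hL

lemma exists_disjoint_isEssentialSubmodule_sup (B : Submodule R E) :
    ∃ T : Submodule R E, Disjoint B T ∧ IsEssentialSubmodule R (B ⊔ T) := by
  obtain ⟨T, -, hT⟩ := zorn_le_nonempty₀ {T : Submodule R E | Disjoint B T}
    (fun c hc hchain _ _ => ⟨sSup c, hchain.directedOn.disjoint_sSup_right.mpr fun _ hb => hc hb,
      fun _ => le_sSup⟩) ⊥ disjoint_bot_right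
  refine ⟨T, hT.prop, fun K hK => ?_⟩
  have hdisj : Disjoint B (T ⊔ K) :=
    hT.prop.disjoint_sup_right_of_disjoint_sup_left (disjoint_iff.mpr hK).symm
  have hKT : K ≤ T := le_sup_right.trans (hT.le_of_ge hdisj le_sup_left)
  rwa [inf_eq_left.mpr (hKT.trans le_sup_right)] at hK

lemma exists_injective_essential_coprod_subtype {κ : X →ₗ[R] E} (hκ : Function.Injective κ) :
    ∃ T : Submodule R E, Function.Injective (κ.coprod T.subtype) ∧
      IsEssentialSubmodule R (LinearMap.range (κ.coprod T.subtype)) := by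
  obtain ⟨T, hdisj, hess⟩ := exists_disjoint_isEssentialSubmodule_sup (LinearMap.range κ)
  refine ⟨T, ?_, ?_⟩
  · rw [← LinearMap.ker_eq_bot, LinearMap.ker_coprod_of_disjoint_range _ _
      (by rwa [T.range_subtype]), LinearMap.ker_eq_bot.mpr hκ, T.ker_subtype, Submodule.prod_bot]
  · rwa [LinearMap.range_coprod, T.range_subtype]

end Essential

section Injective

variable {R} {E E' : Type u} [AddCommGroup E] [Module R E] [AddCommGroup E'] [Module R E']

lemma IsInjectiveModule.exists_leftInverse (hE : IsInjectiveModule R E) {φ : E →ₗ[R] E'}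
    (hφ : Function.Injective φ) : ∃ r : E' →ₗ[R] E, r ∘ₗ φ = LinearMap.id :=
  hE E E' φ hφ LinearMap.id

lemma IsInjectiveModule.bijective_of_comp {X : Type*} [AddCommGroup X] [Module R X]
    (hE : IsInjectiveModule R E) {i : X →ₗ[R] E} {φ : E →ₗ[R] E'}
    (hi : IsEssentialSubmodule R (LinearMap.range i)) (hφi : Function.Injective (φ ∘ₗ i))
    (hφi_ess : IsEssentialSubmodule R (LinearMap.range (φ ∘ₗ i))) : Function.Bijective φ := by
  have hφ : Function.Injective φ := hi.injective_of_comp hφi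
  obtain ⟨r, hr⟩ := hE.exists_leftInverse hφ
  have hr_inj : Function.Injective r := by
    refine hφi_ess.injective_of_comp ?_
    rw [← LinearMap.comp_assoc, hr, LinearMap.id_comp]
    exact Function.Injective.of_comp hφi
  exact ⟨hφ, fun y => ⟨r y, hr_inj (LinearMap.congr_fun hr (r y))⟩⟩

lemma IsInjectiveModule.exists_linearEquiv_comp_eq {X : Type u} [AddCommGroup X] [Module R X]
    (hE : IsInjectiveModule R E) (hE' : IsInjectiveModule R E') {i : X →ₗ[R] E} {j : X →ₗ[R] E'}
    (hi : Function.Injective i) (hi_ess : IsEssentialSubmodule R (LinearMap.range i))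
    (hj : Function.Injective j) (hj_ess : IsEssentialSubmodule R (LinearMap.range j)) :
    ∃ θ : E ≃ₗ[R] E', θ.toLinearMap ∘ₗ i = j := by
  obtain ⟨φ, rfl⟩ := hE' X E i hi j
  exact ⟨LinearEquiv.ofBijective φ (hE.bijective_of_comp hi_ess hj hj_ess), rfl⟩

lemma IsInjectiveEnvelope.exists_injective_comp_eq {M N : Type u} [AddCommGroup M] [Module R M]
    [AddCommGroup N] [Module R N] {i : M →ₗ[R] E} (hi : IsInjectiveEnvelope R M E i)
    {j : N →ₗ[R] E'} (hj : IsInjectiveEnvelope R N E' j) {f : M →ₗ[R] N}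
    (hf : Function.Injective f) :
    ∃ F : E →ₗ[R] E', Function.Injective F ∧ F ∘ₗ i = j ∘ₗ f := by
  obtain ⟨-, hi_inj, hi_ess⟩ := hi
  obtain ⟨hE', hj_inj, -⟩ := hj
  obtain ⟨F, hF⟩ := hE' M E i hi_inj (j ∘ₗ f)
  exact ⟨F, hi_ess.injective_of_comp (hF ▸ hj_inj.comp hf), hF⟩

/-- Bumby's theorem, refined to control the action of `G`. -/
theorem IsInjectiveModule.exists_linearEquiv_comp_eq_shiftRight (hE : IsInjectiveModule R E)
    (hE' : IsInjectiveModule R E') {F : E →ₗ[R] E'} (hF : Function.Injective F)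
    {G : E' →ₗ[R] E} (hG : Function.Injective G) :
    ∃ (θ : E ≃ₗ[R] E') (C : Submodule R E) (T : Submodule R E') (j : (ℕ →₀ C) × T →ₗ[R] E'),
      Function.Injective j ∧ IsEssentialSubmodule R (LinearMap.range j) ∧
        θ.toLinearMap ∘ₗ G ∘ₗ j = j ∘ₗ (shiftRight R C).prodMap LinearMap.id := by
  obtain ⟨r, hr⟩ := hE'.exists_leftInverse hG
  let C := LinearMap.ker r
  obtain ⟨κ, hκ⟩ : ∃ κ : (ℕ →₀ C) →ₗ[R] E', Function.Injective κ := by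
    have hFG : Function.Injective (F ∘ₗ C.subtype.coprod G) :=
      hF.comp (injective_ker_coprod_comp (j := LinearMap.id) hr Function.injective_id)
    exact LinearMap.exists_finsupp_nat_of_prod_injective hFG
  obtain ⟨T, hj, hj_ess⟩ := exists_injective_essential_coprod_subtype hκ
  set j := κ.coprod T.subtype
  -- `E = C ⊕ G E'` contains `C ⊕ C^(ℕ) ⊕ T ≅ C^(ℕ) ⊕ T` essentially, and so does `E'`.
  let e : (C × (ℕ →₀ C) × T) ≃ₗ[R] (ℕ →₀ C) × T :=
    (LinearEquiv.prodAssoc R C (ℕ →₀ C) T).symm ≪≫ₗ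
      (consEquiv R C).prodCongr (LinearEquiv.refl R T)
  have hess : IsEssentialSubmodule R (LinearMap.range (C.subtype.coprod (G ∘ₗ j))) := by
    rw [range_ker_coprod_comp hr]
    exact hj_ess.comap r
  have hess' : IsEssentialSubmodule R (LinearMap.range (j ∘ₗ e.toLinearMap)) := by
    rwa [LinearMap.range_comp_of_range_eq_top _ e.range]
  obtain ⟨θ, hθ⟩ := hE.exists_linearEquiv_comp_eq hE' (injective_ker_coprod_comp hr hj) hess
    (hj.comp e.injective) hess'
  refine ⟨θ, C, T, j, hj, hj_ess, LinearMap.ext fun z => ?_⟩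
  have he : e (0, z) = (shiftRight R C z.1, z.2) := Prod.ext (consEquiv_zero_left z.1) rfl
  simpa [he] using LinearMap.congr_fun hθ (0, z)

end Injective

section AutInvariantSubmodule

variable {R} {E : Type*} [AddCommGroup E] [Module R E]

/-- Invariance of a submodule under all automorphisms of the ambient module. A module is
automorphism-invariant when it has this property inside its injective envelope. -/
def IsAutInvariantSubmodule (Y : Submodule R E) : Prop :=
  ∀ φ : E ≃ₗ[R] E, ∀ y ∈ Y, φ y ∈ Y

/-- The endomorphisms of `Z` that extend along `j : Z → E` to an endomorphism of `E` mapping `Y`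
into itself. -/
def extendableSubring {Z : Type*} [AddCommGroup Z] [Module R Z] (j : Z →ₗ[R] E)
    (Y : Submodule R E) : Subring (Module.End R Z) where
  carrier := {a | ∃ α : Module.End R E, α ∘ₗ j = j ∘ₗ a ∧ ∀ y ∈ Y, α y ∈ Y}
  zero_mem' := ⟨0, by simp, by simp⟩
  one_mem' := ⟨1, rfl, fun _ => id⟩
  add_mem' := by
    rintro a b ⟨α, hα, hαY⟩ ⟨β, hβ, hβY⟩
    exact ⟨α + β, by rw [LinearMap.add_comp, hα, hβ, LinearMap.comp_add],
      fun y hy => Y.add_mem (hαY y hy) (hβY y hy)⟩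
  neg_mem' := by
    rintro a ⟨α, hα, hαY⟩
    exact ⟨-α, by rw [LinearMap.neg_comp, hα, LinearMap.comp_neg],
      fun y hy => Y.neg_mem (hαY y hy)⟩
  mul_mem' := by
    rintro a b ⟨α, hα, hαY⟩ ⟨β, hβ, hβY⟩
    refine ⟨α * β, ?_, fun y hy => hαY _ (hβY y hy)⟩
    rw [Module.End.mul_eq_comp, Module.End.mul_eq_comp, LinearMap.comp_assoc, hβ,
      ← LinearMap.comp_assoc, hα, LinearMap.comp_assoc]

lemma isAutInvariantSubmodule_range {M : Type*} [AddCommGroup M] [Module R M] {i : M →ₗ[R] E}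
    (hi : ∀ φ : E ≃ₗ[R] E, ∀ x, φ (i x) ∈ LinearMap.range i) :
    IsAutInvariantSubmodule (LinearMap.range i) := by
  rintro φ _ ⟨x, rfl⟩
  exact hi φ x

end AutInvariantSubmodule

namespace IsAutInvariantSubmodule

variable {R} {E E' : Type u} [AddCommGroup E] [Module R E] [AddCommGroup E'] [Module R E']

lemma mem_extendableSubring_of_isUnit {Z : Type u} [AddCommGroup Z] [Module R Z]
    {Y : Submodule R E} (hY : IsAutInvariantSubmodule Y) (hE : IsInjectiveModule R E)
    {j : Z →ₗ[R] E} (hj : Function.Injective j)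
    (hj_ess : IsEssentialSubmodule R (LinearMap.range j)) {a : Module.End R Z} (ha : IsUnit a) :
    a ∈ extendableSubring j Y := by
  obtain ⟨ha_inj, ha_surj⟩ := (Module.End.isUnit_iff a).mp ha
  have hess : IsEssentialSubmodule R (LinearMap.range (j ∘ₗ a)) := by
    rwa [LinearMap.range_comp_of_range_eq_top _ (LinearMap.range_eq_top.mpr ha_surj)]
  obtain ⟨θ, hθ⟩ := hE.exists_linearEquiv_comp_eq hE (j := j ∘ₗ a) hj hj_ess (hj.comp ha_inj) hess
  exact ⟨θ.toLinearMap, hθ, hY θ⟩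

lemma mem_of_injective_apply_mem {Y : Submodule R E} (hY : IsAutInvariantSubmodule Y)
    (hE : IsInjectiveModule R E) {F : E →ₗ[R] E} (hF : Function.Injective F) {x : E}
    (hx : F x ∈ Y) : x ∈ Y := by
  obtain ⟨θ, C, T, j, hj, hj_ess, hθ⟩ :=
    hE.exists_linearEquiv_comp_eq_shiftRight hE (F := LinearMap.id) Function.injective_id hF
  obtain ⟨β, hβ, hβY⟩ : (shiftLeft R C).prodMap LinearMap.id ∈ extendableSubring j Y :=
    shiftLeft_prodMap_id_mem_subring fun _ =>
      hY.mem_extendableSubring_of_isUnit hE hj hj_ess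
  let V : E →ₗ[R] E := β ∘ₗ θ.toLinearMap ∘ₗ F
  have hV : V ∘ₗ j = j := by
    calc V ∘ₗ j = β ∘ₗ (θ.toLinearMap ∘ₗ F ∘ₗ j) := rfl
      _ = (β ∘ₗ j) ∘ₗ (shiftRight R C).prodMap LinearMap.id := by rw [hθ, LinearMap.comp_assoc]
      _ = j ∘ₗ (shiftLeft R C * shiftRight R C).prodMap LinearMap.id := by rw [hβ]; rfl
      _ = j := by rw [shiftLeft_mul_shiftRight]; rfl
  have hV_bij : Function.Bijective V :=
    hE.bijective_of_comp hj_ess (hV.symm ▸ hj) (hV.symm ▸ hj_ess)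
  have hVx : V x ∈ Y := hβY _ (hY θ _ hx)
  simpa using hY (LinearEquiv.ofBijective V hV_bij).symm _ hVx

lemma map_le_of_le_comap {X : Submodule R E'} {Y : Submodule R E}
    (hY : IsAutInvariantSubmodule Y) (hE : IsInjectiveModule R E) {F : E' →ₗ[R] E}
    (hF : Function.Injective F) (hXY : X ≤ Y.comap F) (θ : E' ≃ₗ[R] E) :
    X.map θ.toLinearMap ≤ Y := by
  rintro _ ⟨x, hx, rfl⟩
  refine hY.mem_of_injective_apply_mem hE (F := F ∘ₗ θ.symm.toLinearMap)
    (hF.comp θ.symm.injective) ?_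
  simpa using hXY hx

end IsAutInvariantSubmodule

/-- **Theorem 3.1.** If `M` and `N` are automorphism-invariant and there are injective
`R`-linear maps `f : M → N` and `g : N → M`, then `M ≅ N`. -/
theorem stmt13 (M N : Type u) [AddCommGroup M] [Module R M] [AddCommGroup N] [Module R N]
    (hM : IsAutomorphismInvariant R M) (hN : IsAutomorphismInvariant R N)
    (f : M →ₗ[R] N) (hf : Function.Injective f)
    (g : N →ₗ[R] M) (hg : Function.Injective g) :
    Nonempty (M ≃ₗ[R] N) := by
  obtain ⟨E, _, _, i, hi, hi_inv⟩ := hM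
  obtain ⟨E', _, _, j, hj, hj_inv⟩ := hN
  obtain ⟨F, hF, hFi⟩ := hi.exists_injective_comp_eq hj hf
  obtain ⟨G, hG, hGj⟩ := hj.exists_injective_comp_eq hi hg
  obtain ⟨θ, -⟩ := hi.1.exists_linearEquiv_comp_eq_shiftRight hj.1 hF hG
  have hij : (LinearMap.range i).map θ.toLinearMap ≤ LinearMap.range j := by
    refine (isAutInvariantSubmodule_range hj_inv).map_le_of_le_comap hj.1 hF ?_ θ
    rintro _ ⟨x, rfl⟩
    exact ⟨f x, (LinearMap.congr_fun hFi x).symm⟩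
  have hji : (LinearMap.range j).map θ.symm.toLinearMap ≤ LinearMap.range i := by
    refine (isAutInvariantSubmodule_range hi_inv).map_le_of_le_comap hi.1 hG ?_ θ.symm
    rintro _ ⟨y, rfl⟩
    exact ⟨g y, (LinearMap.congr_fun hGj y).symm⟩
  have hrange : (LinearMap.range i).map θ.toLinearMap = LinearMap.range j :=
    le_antisymm hij fun y hy => ⟨θ.symm y, hji ⟨y, hy, rfl⟩, θ.apply_symm_apply y⟩
  exact ⟨(LinearEquiv.ofInjective i hi.2.1).trans
    ((θ.ofSubmodules _ _ hrange).trans (LinearEquiv.ofInjective j hj.2.1).symm)⟩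
end

section
/- Let R be a ring, let M be an automorphism-invariant right R-module, let N be a right R-module, and let f : M → N and g : N → M be injective R-linear maps. Then f(M) is a direct summand of N; that is, there exists a submodule H of N with N = H ⊕ f(M). -/
/-!
Theorem 3.1: Schröder–Bernstein for automorphism-invariant modules.
"Right R-modules" are formalized as Lean `Module R` modules (the theory is
side-symmetric).
-/

universe u

variable (R : Type u) [Ring R]

/-!
An injective endomorphism of `M` extends to an endomorphism `s` of `E = E(M)` which has a left
inverse `t`, and it suffices to show that `t` maps `M` to itself. The endomorphisms of `E` that do
so form a ring containing every automorphism, so it suffices that `t` belongs to the subring of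
`End E` generated by the units.

Put `K = ker t`, so that `E = K ⊕ s E` and `K, s K, s² K, …` are independent. Let `G` be an
injective hull in `E` of `K + s² K + s⁴ K + ⋯`. Then `F = G ⊕ s G` is an injective hull of
`L = K + s K + s² K + ⋯`, hence `E = F ⊕ C` for some `C`. Two facts finish the proof.

* Since `F ≅ G²`, every endomorphism of `E` factoring through `F` is generated by units: the
  off-diagonal blocks square to zero, the other blocks are products of off-diagonal ones, and
  `1 + q` is a unit whenever `q² = 0`.
* Since `L = K + s L`, the complement `K ⊕ s F` of `s C` is an injective hull of `L` too, hence is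
  isomorphic to `F`. So some automorphism `c` of `E` agrees with `s` on `C`, and in
  `t = c⁻¹ + t (c - s) c⁻¹` the factor `c - s` vanishes on `C`, i.e. factors through `F`.
-/

universe v

variable {R}

section Lattice

variable {α : Type*}

/-- `a` is essential in `b`: it is below `b` and meets every nonzero element below `b`
nontrivially. For submodules of a common module this is the relative form of
`IsEssentialSubmodule`. -/
def IsEssentialIn [Lattice α] [OrderBot α] (a b : α) : Prop :=
  a ≤ b ∧ ∀ x ≤ b, Disjoint x a → x = ⊥

namespace IsEssentialIn

variable [Lattice α] [OrderBot α] {a b c d : α}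

theorem refl (a : α) : IsEssentialIn a a :=
  ⟨le_rfl, fun _ hxa hx => hx.eq_bot_of_le hxa⟩

theorem disjoint_left (hab : IsEssentialIn a b) (hac : Disjoint a c) : Disjoint b c :=
  disjoint_iff.2 <| hab.2 _ inf_le_left (hac.mono_right inf_le_right).symm

theorem disjoint (hab : IsEssentialIn a b) (hcd : IsEssentialIn c d) (hac : Disjoint a c) :
    Disjoint b d :=
  (hcd.disjoint_left (hab.disjoint_left hac).symm).symm

theorem trans (hab : IsEssentialIn a b) (hbc : IsEssentialIn b c) : IsEssentialIn a c :=
  ⟨hab.1.trans hbc.1, fun x hxc hxa => hbc.2 x hxc (hab.disjoint_left hxa.symm).symm⟩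

variable [IsModularLattice α]

theorem sup_right (hab : IsEssentialIn a b) (hbc : Disjoint b c) :
    IsEssentialIn (a ⊔ c) (b ⊔ c) := by
  refine ⟨sup_le_sup_right hab.1 c, fun x hx hxac => ?_⟩
  have hca : Disjoint c a := (hbc.mono_left hab.1).symm
  have hb : Disjoint b (x ⊔ c) := hab.disjoint_left
    (hca.disjoint_sup_left_of_disjoint_sup_right (sup_comm a c ▸ hxac)).symm
  have hxc : x ⊔ c = c := calc
    x ⊔ c = (c ⊔ b) ⊓ (x ⊔ c) := (inf_eq_right.2 (sup_comm c b ▸ sup_le hx le_sup_right)).symm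
    _ = c ⊔ b ⊓ (x ⊔ c) := sup_inf_assoc_of_le b le_sup_right
    _ = c := by rw [hb.eq_bot, sup_bot_eq]
  exact hxac.eq_bot_of_le ((sup_eq_right.1 hxc).trans le_sup_right)

theorem sup (hab : IsEssentialIn a b) (hcd : IsEssentialIn c d) (hac : Disjoint a c) :
    IsEssentialIn (a ⊔ c) (b ⊔ d) := by
  have hbd : Disjoint b d := hab.disjoint hcd hac
  have hcd' := hcd.sup_right hbd.symm
  rw [sup_comm c, sup_comm d] at hcd'
  exact (hab.sup_right (hbd.mono_right hcd.1)).trans hcd'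

theorem of_maximal_disjoint (hab : a ≤ b) (hc : Maximal (Disjoint · a) c) (hbc : Disjoint b c) :
    IsEssentialIn a b := by
  refine ⟨hab, fun x hxb hxa => ?_⟩
  have hsup : Disjoint (c ⊔ x) a :=
    hxa.disjoint_sup_left_of_disjoint_sup_right (hbc.symm.mono_right (sup_le hxb hab))
  have hxc : x ≤ c := le_sup_right.trans (hc.2 hsup le_sup_left)
  exact (hbc.mono_left hxb).eq_bot_of_le hxc

end IsEssentialIn

theorem exists_le_maximal_disjoint [CompleteLattice α] [IsCompactlyGenerated α] {a b : α}
    (h : Disjoint b a) : ∃ c, b ≤ c ∧ Maximal (Disjoint · a) c :=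
  zorn_le_nonempty₀ {c | Disjoint c a}
    (fun s hs hchain _ _ => ⟨sSup s, hchain.directedOn.disjoint_sSup_left.2 fun _ hb => hs hb,
      fun _ hz => le_sSup hz⟩) b h

end Lattice

section UnitSubring

variable {A : Type*} [Ring A]

variable (A) in
/-- The subring of `A` generated by the units of `A`. -/
def unitSubring : Subring A :=
  Subring.closure {x | IsUnit x}

theorem mem_unitSubring_of_isUnit {x : A} (hx : IsUnit x) : x ∈ unitSubring A :=
  Subring.subset_closure hx

theorem mem_unitSubring_of_mul_self_eq_zero {q : A} (hq : q * q = 0) : q ∈ unitSubring A := by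
  have hunit : IsUnit (1 + q) := IsNilpotent.isUnit_one_add ⟨2, by rw [sq, hq]⟩
  simpa only [add_sub_cancel_left] using
    sub_mem (mem_unitSubring_of_isUnit hunit) (one_mem (unitSubring A))

theorem mul_mul_mem_unitSubring {e x y : A} (he : IsIdempotentElem e) (hxy : x * (1 - e) * y = e)
    (a b : A) : a * e * b ∈ unitSubring A := by
  have upper (z : A) : e * z * (1 - e) ∈ unitSubring A :=
    mem_unitSubring_of_mul_self_eq_zero <| by
      rw [mul_assoc, ← mul_assoc (1 - e), ← mul_assoc (1 - e), he.one_sub_mul_self, zero_mul,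
        zero_mul, mul_zero]
  have lower (z : A) : (1 - e) * z * e ∈ unitSubring A :=
    mem_unitSubring_of_mul_self_eq_zero <| by
      rw [mul_assoc, ← mul_assoc e, ← mul_assoc e, he.mul_one_sub_self, zero_mul,
        zero_mul, mul_zero]
  have corner (z : A) : e * z * e ∈ unitSubring A := by
    have hz : e * z * e = e * (z * x) * (1 - e) * ((1 - e) * y * e) := by
      calc e * z * e = e * z * (x * ((1 - e) * (1 - e)) * y) * e := by
            rw [he.one_sub.eq, hxy, mul_assoc (e * z), he.eq]
        _ = _ := by simp only [mul_assoc]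
    rw [hz]
    exact mul_mem (upper _) (lower _)
  have left : a * e ∈ unitSubring A := by
    rw [show a * e = e * a * e + (1 - e) * a * e by noncomm_ring]
    exact add_mem (corner a) (lower a)
  have right : e * b ∈ unitSubring A := by
    rw [show e * b = e * b * e + e * b * (1 - e) by noncomm_ring]
    exact add_mem (corner b) (upper b)
  rw [← he.eq, ← mul_assoc, mul_assoc (a * e)]
  exact mul_mem left right

end UnitSubring

section LeftInverse

variable {E P : Type*} [AddCommGroup E] [Module R E] [AddCommGroup P] [Module R P]

theorem isCompl_range_ker_of_comp_eq_id {i : P →ₗ[R] E} {ρ : E →ₗ[R] P}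
    (h : ρ ∘ₗ i = LinearMap.id) : IsCompl (LinearMap.range i) (LinearMap.ker ρ) := by
  have hρ (x : P) : ρ (i x) = x := LinearMap.congr_fun h x
  refine ⟨Submodule.disjoint_def.2 ?_, codisjoint_iff.2 (eq_top_iff.2 fun x _ => ?_)⟩
  · rintro _ ⟨x, rfl⟩ hx
    rw [LinearMap.mem_ker, hρ] at hx
    rw [hx, map_zero]
  · exact Submodule.mem_sup.2 ⟨i (ρ x), ⟨ρ x, rfl⟩, x - i (ρ x),
      by rw [LinearMap.mem_ker, map_sub, hρ, sub_self], add_sub_cancel _ _⟩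

theorem comp_mem_unitSubring {i : P × P →ₗ[R] E} {ρ : E →ₗ[R] P × P}
    (h : ρ ∘ₗ i = LinearMap.id) (α : P × P →ₗ[R] E) (β : E →ₗ[R] P × P) :
    α ∘ₗ β ∈ unitSubring (Module.End R E) := by
  have hρ (x : P × P) : ρ (i x) = x := LinearMap.congr_fun h x
  let i₁ := i ∘ₗ LinearMap.inl R P P
  let i₂ := i ∘ₗ LinearMap.inr R P P
  let ρ₁ := LinearMap.fst R P P ∘ₗ ρ
  let ρ₂ := LinearMap.snd R P P ∘ₗ ρ
  let e : Module.End R E := i₁ ∘ₗ ρ₁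
  have he : IsIdempotentElem e := by
    ext x
    simp [e, i₁, ρ₁, hρ]
  have hswap : (i₁ ∘ₗ ρ₂ : Module.End R E) * (1 - e) * (i₂ ∘ₗ ρ₁ : Module.End R E) = e := by
    ext x
    simp [e, i₁, i₂, ρ₁, ρ₂, hρ]
  have factor (γ : P →ₗ[R] E) (δ : E →ₗ[R] P) : γ ∘ₗ δ ∈ unitSubring (Module.End R E) := by
    have hγδ : γ ∘ₗ δ = (γ ∘ₗ ρ₁ : Module.End R E) * e * (i₁ ∘ₗ δ : Module.End R E) := by
      ext x
      simp [e, i₁, ρ₁, hρ]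
    rw [hγδ]
    exact mul_mul_mem_unitSubring he hswap _ _
  have hsplit : α ∘ₗ β = (α ∘ₗ LinearMap.inl R P P) ∘ₗ LinearMap.fst R P P ∘ₗ β +
      (α ∘ₗ LinearMap.inr R P P) ∘ₗ LinearMap.snd R P P ∘ₗ β := by
    ext x
    simp [← map_add]
  rw [hsplit]
  exact add_mem (factor _ _) (factor _ _)

theorem mem_unitSubring_of_eqOn_ker {s t : Module.End R E} (h : t * s = 1) {i : P × P →ₗ[R] E}
    {ρ : E →ₗ[R] P × P} (hρ : ρ ∘ₗ i = LinearMap.id) {c : (Module.End R E)ˣ}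
    (hc : Set.EqOn c.1 s (LinearMap.ker ρ)) : t ∈ unitSubring (Module.End R E) := by
  let d : Module.End R E := c - s
  have hd : d = (d ∘ₗ i) ∘ₗ ρ := by
    ext x
    have hx : x - i (ρ x) ∈ LinearMap.ker ρ := by
      rw [LinearMap.mem_ker, map_sub, sub_eq_zero]
      exact (LinearMap.congr_fun hρ (ρ x)).symm
    have hdx : d (x - i (ρ x)) = 0 := sub_eq_zero.2 (hc hx)
    rwa [map_sub, sub_eq_zero] at hdx
  have ht : t = ↑c⁻¹ + t * d * ↑c⁻¹ := by
    rw [mul_sub, sub_mul, h, one_mul, mul_assoc, c.mul_inv, mul_one, add_sub_cancel]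
  rw [ht, hd]
  exact add_mem (mem_unitSubring_of_isUnit c⁻¹.isUnit)
    (comp_mem_unitSubring hρ (t ∘ₗ d ∘ₗ i) (ρ ∘ₗ ↑c⁻¹))

end LeftInverse

section Submodule

variable {E P : Type*} [AddCommGroup E] [Module R E] [AddCommGroup P] [Module R P]

namespace IsEssentialIn

variable {L F : Submodule R E} {φ : E →ₗ[R] P}

theorem injective_comp_subtype (hF : IsEssentialIn L F) (hφ : Disjoint L (LinearMap.ker φ)) :
    Function.Injective (φ ∘ₗ F.subtype) := by
  rw [← LinearMap.ker_eq_bot, LinearMap.ker_comp, ← Submodule.disjoint_iff_comap_eq_bot]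
  exact hF.disjoint_left hφ

theorem map (hF : IsEssentialIn L F) (hφ : Function.Injective φ) :
    IsEssentialIn (L.map φ) (F.map φ) := by
  refine ⟨Submodule.map_mono hF.1, fun X hXF hXL => ?_⟩
  have hX : (X.comap φ).map φ = X :=
    Submodule.map_comap_eq_of_le (hXF.trans LinearMap.map_le_range)
  have hcomap : X.comap φ = ⊥ := hF.2 _
    (Submodule.comap_map_eq_of_injective hφ F ▸ Submodule.comap_mono hXF)
    (Submodule.disjoint_def.2 fun x hxX hxL => (map_eq_zero_iff φ hφ).1 <|
      Submodule.disjoint_def.1 hXL _ hxX (Submodule.mem_map_of_mem hxL))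
  rw [← hX, hcomap, Submodule.map_bot]

end IsEssentialIn

end Submodule

section Injective

theorem injective_coprod {E P Q : Type*} [AddCommGroup E] [Module R E] [AddCommGroup P]
    [Module R P] [AddCommGroup Q] [Module R Q] {f : P →ₗ[R] E} {g : Q →ₗ[R] E}
    (hf : Function.Injective f) (hg : Function.Injective g)
    (h : Disjoint (LinearMap.range f) (LinearMap.range g)) : Function.Injective (f.coprod g) := by
  rw [← LinearMap.ker_eq_bot, LinearMap.ker_coprod_of_disjoint_range f g h,
    LinearMap.ker_eq_bot.2 hf, LinearMap.ker_eq_bot.2 hg, Submodule.prod_bot]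

variable {E : Type v} [AddCommGroup E] [Module R E]

theorem exists_comp_eq_id_of_injective {P : Type v} [AddCommGroup P] [Module R P]
    [Module.Injective R P] {i : P →ₗ[R] E} (hi : Function.Injective i) :
    ∃ ρ : E →ₗ[R] P, ρ ∘ₗ i = LinearMap.id :=
  (Module.Injective.out i hi LinearMap.id).imp fun _ hρ => LinearMap.ext hρ

theorem injective_prod (P Q : Type v) [AddCommGroup P] [Module R P] [Module.Injective R P]
    [AddCommGroup Q] [Module R Q] [Module.Injective R Q] : Module.Injective R (P × Q) where
  out _ _ _ _ _ _ f hf g := by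
    obtain ⟨p, hp⟩ := Module.Injective.out f hf (LinearMap.fst R P Q ∘ₗ g)
    obtain ⟨q, hq⟩ := Module.Injective.out f hf (LinearMap.snd R P Q ∘ₗ g)
    exact ⟨p.prod q, fun x => Prod.ext (hp x) (hq x)⟩

theorem nonempty_linearEquiv_of_isEssentialIn {L F F' : Submodule R E} [Module.Injective R F]
    [Module.Injective R F'] (hF : IsEssentialIn L F) (hF' : IsEssentialIn L F') :
    Nonempty (F ≃ₗ[R] F') := by
  obtain ⟨φ, hφ⟩ := Module.Injective.out L.subtype L.injective_subtype (Submodule.inclusion hF'.1)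
  have hφL {x : E} (hx : x ∈ L) : (φ x : E) = x := congrArg Subtype.val (hφ ⟨x, hx⟩)
  have hφinj : Function.Injective (φ ∘ₗ F.subtype) :=
    hF.injective_comp_subtype <| Submodule.disjoint_def.2 fun x hx hx0 => by
      rw [← hφL hx, LinearMap.mem_ker.1 hx0, Submodule.coe_zero]
  obtain ⟨ψ, hψ⟩ := exists_comp_eq_id_of_injective (i := F'.subtype ∘ₗ φ ∘ₗ F.subtype)
    (F'.injective_subtype.comp hφinj)
  have hψφ (x : F) : ψ (φ x) = x := LinearMap.congr_fun hψ x
  have hψinj : Function.Injective (ψ ∘ₗ F'.subtype) :=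
    hF'.injective_comp_subtype <| Submodule.disjoint_def.2 fun x hx hx0 => by
      have hψx : ψ x = ⟨x, hF.1 hx⟩ := by simpa only [hφL hx] using hψφ ⟨x, hF.1 hx⟩
      simpa only [LinearMap.mem_ker, hψx, Submodule.mk_eq_zero] using hx0
  exact ⟨LinearEquiv.ofBijective (φ ∘ₗ F.subtype)
    ⟨hφinj, fun y => ⟨ψ y, hψinj (hψφ (ψ y))⟩⟩⟩

variable [Module.Injective R E]

theorem injective_of_isCompl {F C : Submodule R E} (h : IsCompl F C) : Module.Injective R F where
  out _ _ _ _ _ _ f hf g := by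
    obtain ⟨k, hk⟩ := Module.Injective.out f hf (F.subtype ∘ₗ g)
    exact ⟨F.projectionOnto C h ∘ₗ k, fun x => by simp [hk]⟩

theorem isCompl_of_maximal_disjoint {F C : Submodule R E} (hC : Maximal (Disjoint · F) C)
    (hF : Maximal (Disjoint · C) F) : IsCompl F C := by
  have hinj : Function.Injective (F.subtype.coprod C.subtype) :=
    injective_coprod F.injective_subtype C.injective_subtype <| by
      simpa only [Submodule.range_subtype] using hF.1
  obtain ⟨e, he⟩ := Module.Injective.out _ hinj (F.subtype ∘ₗ LinearMap.fst R F C)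
  have heF {x : E} (hx : x ∈ F) : e x = x := by simpa using he (⟨x, hx⟩, 0)
  have heC {x : E} (hx : x ∈ C) : e x = 0 := by simpa using he (0, ⟨x, hx⟩)
  have hcomap : C.comap e ≤ C := by
    refine hC.2 (Submodule.disjoint_def.2 fun x hxC hxF => ?_) fun x hx => by simp [heC hx]
    rw [Submodule.mem_comap, heF hxF] at hxC
    exact Submodule.disjoint_def.1 hF.1 x hxF hxC
  have hrange : LinearMap.range e ≤ F := by
    refine hF.2 (Submodule.disjoint_def.2 ?_) fun x hx => ⟨x, heF hx⟩
    rintro _ ⟨x, rfl⟩ hx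
    exact heC (hcomap hx)
  refine ⟨hF.1, codisjoint_iff.2 (eq_top_iff.2 fun x _ => ?_)⟩
  have hex : e x ∈ F := hrange ⟨x, rfl⟩
  have hsub : x - e x ∈ C := hcomap (by simp [heF hex])
  exact Submodule.mem_sup.2 ⟨e x, hex, x - e x, hsub, add_sub_cancel _ _⟩

theorem exists_isCompl_isEssentialIn (L : Submodule R E) :
    ∃ F C : Submodule R E, IsCompl F C ∧ IsEssentialIn L F := by
  obtain ⟨C, -, hC⟩ := exists_le_maximal_disjoint (disjoint_bot_left : Disjoint ⊥ L)
  obtain ⟨F, hLF, hF⟩ := exists_le_maximal_disjoint hC.1.symm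
  have hCF : Maximal (Disjoint · F) C :=
    ⟨hF.1.symm, fun X hX hCX => hC.2 (hX.mono_right hLF) hCX⟩
  exact ⟨F, C, isCompl_of_maximal_disjoint hCF hF, .of_maximal_disjoint hLF hC hF.1⟩

end Injective

section Shift

variable {E P : Type*} [AddCommGroup E] [Module R E] [AddCommGroup P] [Module R P]

/-- The sum `K + s K + s² K + ⋯`, that is, the smallest `s`-invariant submodule containing `K`. -/
def orbitSum (s : Module.End R E) (K : Submodule R E) : Submodule R E :=
  ⨆ n : ℕ, K.map (s ^ n)

theorem sup_map_orbitSum (s : Module.End R E) (K : Submodule R E) :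
    K ⊔ (orbitSum s K).map s = orbitSum s K := by
  have hmap : (orbitSum s K).map s = ⨆ n : ℕ, K.map (s ^ (n + 1)) := by
    simp only [orbitSum, Submodule.map_iSup, ← Submodule.map_comp, pow_succ',
      Module.End.mul_eq_comp]
  have hzero : K.map (s ^ 0) = K := by rw [pow_zero, Module.End.one_eq_id, Submodule.map_id]
  rw [hmap, orbitSum, ← sup_iSup_nat_succ fun n => K.map (s ^ n), hzero]

theorem exists_pow_apply_eq_zero_of_mem_orbitSum_sq {s t : Module.End R E} (h : t * s = 1) {x : E}
    (hx : x ∈ orbitSum (s ^ 2) (LinearMap.ker t)) : ∃ n : ℕ, (t ^ n) x = 0 := by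
  have hle : orbitSum (s ^ 2) (LinearMap.ker t) ≤ ⨆ n : ℕ, LinearMap.iterateKer t n := by
    refine iSup_le fun n => le_iSup_of_le (2 * n + 1) ?_
    rintro _ ⟨k, hk, rfl⟩
    change (t ^ (2 * n + 1) * (s ^ 2) ^ n) k = 0
    rw [← pow_mul, pow_succ', mul_assoc, pow_mul_pow_eq_one _ h, mul_one]
    exact hk
  exact (Submodule.mem_iSup_of_directed _ (LinearMap.iterateKer t).monotone.directed_le).1 (hle hx)

theorem disjoint_orbitSum_sq_map {s t : Module.End R E} (h : t * s = 1) :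
    Disjoint (orbitSum (s ^ 2) (LinearMap.ker t))
      ((orbitSum (s ^ 2) (LinearMap.ker t)).map s) := by
  set A := orbitSum (s ^ 2) (LinearMap.ker t) with hA
  have hts (x : E) : t (s x) = x := LinearMap.congr_fun h x
  have hinv {x : E} (hxA : x ∈ A) (hxs : x ∈ A.map s) :
      t x ∈ A ∧ t x ∈ A.map s ∧ s (t x) = x := by
    obtain ⟨y, hy, rfl⟩ := hxs
    rw [hA, ← sup_map_orbitSum, ← hA] at hxA
    obtain ⟨k, hk, _, ⟨a, ha, rfl⟩, hka⟩ := Submodule.mem_sup.1 hxA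
    have hya : y = s a := calc
      y = t (k + (s ^ 2) a) := by rw [hka, hts]
      _ = s a := by rw [map_add, LinearMap.mem_ker.1 hk, zero_add, sq, Module.End.mul_apply, hts]
    rw [hts]
    exact ⟨hy, ⟨a, ha, hya.symm⟩, rfl⟩
  have hzero (n : ℕ) {x : E} (hxA : x ∈ A) (hxs : x ∈ A.map s) (hx : (t ^ n) x = 0) : x = 0 := by
    induction n generalizing x with
    | zero => exact hx
    | succ n ih =>
      obtain ⟨htA, htsA, hst⟩ := hinv hxA hxs
      rw [← hst, ih htA htsA hx, map_zero]
  refine Submodule.disjoint_def.2 fun x hxA hxs => ?_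
  obtain ⟨n, hn⟩ := exists_pow_apply_eq_zero_of_mem_orbitSum_sq h hxA
  exact hzero n hxA hxs hn

theorem isCompl_ker_sup_map {s : P →ₗ[R] E} {t : E →ₗ[R] P} (h : t ∘ₗ s = LinearMap.id)
    {F C : Submodule R P} (hFC : IsCompl F C) :
    IsCompl (LinearMap.ker t ⊔ F.map s) (C.map s) := by
  have hs : Function.Injective s := LinearMap.injective_of_comp_eq_id s t h
  have hrange : F.map s ⊔ C.map s = LinearMap.range s := by
    rw [← Submodule.map_sup, hFC.sup_eq_top, Submodule.map_top]
  refine (Submodule.disjoint_map hs hFC.disjoint).isCompl_sup_left_of_isCompl_sup_right ?_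
  rw [hrange]
  exact (isCompl_range_ker_of_comp_eq_id h).symm

end Shift

section UnitGenerated

variable {E : Type v} [AddCommGroup E] [Module R E] [Module.Injective R E]

theorem exists_unit_eqOn {s t : Module.End R E} (h : t * s = 1) {L F C : Submodule R E}
    (hL : LinearMap.ker t ⊔ L.map s = L) (hLF : IsEssentialIn L F) (hFC : IsCompl F C) :
    ∃ c : (Module.End R E)ˣ, Set.EqOn c.1 s C := by
  have hs : Function.Injective s := LinearMap.injective_of_comp_eq_id s t h
  have hFC' : IsCompl (LinearMap.ker t ⊔ F.map s) (C.map s) := isCompl_ker_sup_map h hFC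
  have hLF' : IsEssentialIn L (LinearMap.ker t ⊔ F.map s) := by
    have hdisj : Disjoint (LinearMap.ker t) (L.map s) :=
      (isCompl_range_ker_of_comp_eq_id h).disjoint.symm.mono_right LinearMap.map_le_range
    simpa only [hL] using (IsEssentialIn.refl (LinearMap.ker t)).sup (hLF.map hs) hdisj
  have := injective_of_isCompl hFC
  have := injective_of_isCompl hFC'
  obtain ⟨e⟩ := nonempty_linearEquiv_of_isEssentialIn hLF hLF'
  let c : E ≃ₗ[R] E := (Submodule.prodEquivOfIsCompl F C hFC).symm ≪≫ₗ
    e.prodCongr (Submodule.equivMapOfInjective s hs C) ≪≫ₗ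
    Submodule.prodEquivOfIsCompl _ _ hFC'
  refine ⟨LinearMap.GeneralLinearGroup.ofLinearEquiv c, fun x hx => ?_⟩
  change c x = s x
  simp [c, Submodule.prodEquivOfIsCompl_symm_apply_right F C hFC ⟨x, hx⟩]

theorem exists_prod_retract_isEssentialIn {s t : Module.End R E} (h : t * s = 1) :
    ∃ (G L : Submodule R E) (i : G × G →ₗ[R] E) (ρ : E →ₗ[R] G × G), ρ ∘ₗ i = LinearMap.id ∧
      LinearMap.ker t ⊔ L.map s = L ∧ IsEssentialIn L (LinearMap.range i) := by
  have hs : Function.Injective s := LinearMap.injective_of_comp_eq_id s t h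
  let A := orbitSum (s ^ 2) (LinearMap.ker t)
  have hdisj : Disjoint A (A.map s) := disjoint_orbitSum_sq_map h
  have hL : LinearMap.ker t ⊔ (A ⊔ A.map s).map s = A ⊔ A.map s := by
    have hA : (A.map s).map s = A.map (s ^ 2) := by
      rw [← Submodule.map_comp, sq, Module.End.mul_eq_comp]
    rw [Submodule.map_sup, hA, sup_left_comm, sup_map_orbitSum, sup_comm]
  obtain ⟨G, D, hGD, hAG⟩ := exists_isCompl_isEssentialIn A
  have := injective_of_isCompl hGD
  have := injective_prod (R := R) G G
  let i : G × G →ₗ[R] E := G.subtype.coprod (s ∘ₗ G.subtype)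
  have hrange : LinearMap.range i = G ⊔ G.map s := by
    simp [i, LinearMap.range_coprod, LinearMap.range_comp]
  have hi : Function.Injective i :=
    injective_coprod G.injective_subtype (hs.comp G.injective_subtype) <| by
      simpa only [LinearMap.range_comp, Submodule.range_subtype] using
        hAG.disjoint (hAG.map hs) hdisj
  obtain ⟨ρ, hρ⟩ := exists_comp_eq_id_of_injective hi
  exact ⟨G, A ⊔ A.map s, i, ρ, hρ, hL, hrange ▸ hAG.sup (hAG.map hs) hdisj⟩

theorem mem_unitSubring_of_mul_eq_one {s t : Module.End R E} (h : t * s = 1) :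
    t ∈ unitSubring (Module.End R E) := by
  obtain ⟨G, L, i, ρ, hρ, hL, hLi⟩ := exists_prod_retract_isEssentialIn h
  obtain ⟨c, hc⟩ := exists_unit_eqOn h hL hLi (isCompl_range_ker_of_comp_eq_id hρ)
  exact mem_unitSubring_of_eqOn_ker h hρ hc

end UnitGenerated

section Stabilizer

variable {E : Type*} [AddCommGroup E] [Module R E]

/-- The ring of the endomorphisms of `E` that map the submodule `P` into itself. -/
def stabilizerSubring (P : Submodule R E) : Subring (Module.End R E) where
  carrier := {f | P ≤ P.comap f}
  mul_mem' hf hg _ hx := hf (hg hx)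
  one_mem' _ hx := hx
  add_mem' hf hg _ hx := P.add_mem (hf hx) (hg hx)
  zero_mem' _ _ := P.zero_mem
  neg_mem' hf _ hx := P.neg_mem (hf hx)

theorem unitSubring_le_stabilizerSubring {P : Submodule R E}
    (hP : ∀ φ : E ≃ₗ[R] E, P ≤ P.comap (φ : E →ₗ[R] E)) :
    unitSubring (Module.End R E) ≤ stabilizerSubring P :=
  Subring.closure_le.2 fun f hf =>
    hP (LinearEquiv.ofBijective f ((Module.End.isUnit_iff f).1 hf))

end Stabilizer

theorem IsInjectiveModule.moduleInjective {E : Type u} [AddCommGroup E] [Module R E]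
    (hE : IsInjectiveModule R E) : Module.Injective R E where
  out X Y _ _ _ _ i hi f := (hE X Y i hi f).imp fun _ hg => LinearMap.congr_fun hg

theorem IsAutomorphismInvariant.exists_comp_eq_id {M : Type u} [AddCommGroup M] [Module R M]
    (hM : IsAutomorphismInvariant R M) {h : M →ₗ[R] M} (hh : Function.Injective h) :
    ∃ r : M →ₗ[R] M, r ∘ₗ h = LinearMap.id := by
  obtain ⟨E, _, _, u, ⟨hE, hu, hess⟩, hinv⟩ := hM
  have := hE.moduleInjective
  obtain ⟨s, hs⟩ := Module.Injective.out u hu (u ∘ₗ h)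
  have hs_inj : Function.Injective s := by
    refine LinearMap.ker_eq_bot.1 (hess _ (disjoint_iff.1 (Submodule.disjoint_def.2 ?_)))
    rintro _ hx ⟨x, rfl⟩
    have hux : u (h x) = 0 := (hs x).symm.trans hx
    rw [(map_eq_zero_iff h hh).1 ((map_eq_zero_iff u hu).1 hux), map_zero]
  obtain ⟨t, ht⟩ := exists_comp_eq_id_of_injective hs_inj
  have hstab : t ∈ stabilizerSubring (LinearMap.range u) :=
    unitSubring_le_stabilizerSubring (by rintro φ _ ⟨x, rfl⟩; exact hinv φ x)
      (mem_unitSubring_of_mul_eq_one ht)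
  let e : M ≃ₗ[R] LinearMap.range u := LinearEquiv.ofInjective u hu
  let r : M →ₗ[R] M :=
    e.symm ∘ₗ (t ∘ₗ u).codRestrict (LinearMap.range u) fun x => hstab ⟨x, rfl⟩
  have hur (y : M) : u (r y) = t (u y) := congrArg Subtype.val (e.apply_symm_apply _)
  refine ⟨r, LinearMap.ext fun x => hu ?_⟩
  calc u (r (h x)) = t (s (u x)) := by rw [hur, hs, LinearMap.comp_apply]
    _ = u x := LinearMap.congr_fun ht (u x)

variable (R)

theorem stmt14_general (M : Type u) (N : Type*) [AddCommGroup M] [Module R M] [AddCommGroup N]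
    [Module R N] (hM : IsAutomorphismInvariant R M) (f : M →ₗ[R] N) (g : N →ₗ[R] M)
    (hgf : Function.Injective (g ∘ₗ f)) :
    ∃ H : Submodule R N, IsCompl H (LinearMap.range f) := by
  obtain ⟨r, hr⟩ := hM.exists_comp_eq_id hgf
  exact ⟨LinearMap.ker (r ∘ₗ g), (isCompl_range_ker_of_comp_eq_id (ρ := r ∘ₗ g) hr).symm⟩

/-- If `M` is automorphism-invariant and there are injective `R`-linear maps `f : M → N`
and `g : N → M`, then `f(M)` is a direct summand of `N`: there is a submodule `H` of `N`
with `N = H ⊕ f(M)` (internally, `H` is a complement of `f(M)`). -/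
theorem stmt14 (M N : Type u) [AddCommGroup M] [Module R M] [AddCommGroup N] [Module R N]
    (hM : IsAutomorphismInvariant R M)
    (f : M →ₗ[R] N) (hf : Function.Injective f)
    (g : N →ₗ[R] M) (hg : Function.Injective g) :
    ∃ H : Submodule R N, IsCompl H (LinearMap.range f) :=
  stmt14_general R M N hM f g (hg.comp hf)
end
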